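/- arXiv:2002.07295 — 3 statements merged into one kernel-verified Lean document; each statement's English description precedes it below -/
import Mathlib

section
/- Let g : ℝ → ℝ be a continuous, bounded, nonnegative, integrable function and let k > 0. Then there exists a function h, smooth on the open upper half-plane ℍ = {z ∈ ℂ : Im z > 0} and continuous on its closure, such that Δh = k·h on ℍ, h = g on ℝ, 0 ≤ h ≤ sup g everywhere, and there is a constant C > 0 (depending only on k) such that h(x + iy) ≤ C · ‖g‖_{L¹(ℝ)} · e^{−2√k · y} / √y for all x ∈ ℝ and y ≥ 1. -/
/-- The operator `Δ = ∂_z ∂_z̄ = (1/4)(∂²/∂x² + ∂²/∂y²)` acting on functions on `ℂ`. -/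
noncomputable def lap (u : ℂ → ℝ) (z : ℂ) : ℝ :=
  (1 / 4) * (iteratedFDeriv ℝ 2 u z ![1, 1] + iteratedFDeriv ℝ 2 u z ![Complex.I, Complex.I])

/-!
Writing the Bessel kernel of `Δ - k` by subordination, the Poisson kernel of `Δ - k` on the upper
half-plane is `P_k(z) = π⁻¹ y ∫₀^∞ exp (-|z|²u - k/u) du` for `z = x + iy`. The equation
`Δ P_k = k P_k` is an integration by parts in `u`, and it passes to `h = P_k * g`, the convolution
along horizontal lines, because all derivatives of `P_k` are bounded away from the real line.

Rescaling `u` gives `P_{k y²}(τ + i) = y P_k(yτ + iy)`, hence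
`h(x + iy) = ∫ P_{k y²}(τ + i) g(x - yτ) dτ`. The weight is at most the Cauchy density
`π⁻¹ / (1 + τ²)`, with equality for `y = 0`: this gives continuity up to the boundary, the boundary
values and `0 ≤ h ≤ sup g`. Finally `|h(x + iy)| ≤ P_k(iy) ‖g‖₁`, and `P_k(iy)` is estimated by
Laplace's method at the maximum `u = √k / y` of the exponent, whose value there is `-2 √k y`.
-/

open Real Set Filter Topology MeasureTheory
open UpperHalfPlane (upperHalfPlaneSet isOpen_upperHalfPlaneSet)
open scoped ContDiff

section LaplaceMoment

theorem integral_pow_mul_exp_neg_mul_Ioi (n : ℕ) {r : ℝ} (hr : 0 < r) :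
    ∫ u in Ioi (0 : ℝ), u ^ n * exp (-(r * u)) = n.factorial / r ^ (n + 1) := by
  have key := integral_rpow_mul_exp_neg_mul_Ioi (a := n + 1) (by positivity) hr
  rw [Gamma_nat_eq_factorial] at key
  simp only [add_sub_cancel_right, rpow_natCast] at key
  rw [key, ← Nat.cast_add_one, rpow_natCast, one_div_pow, one_div_mul_eq_div]

theorem integrableOn_pow_mul_exp_neg_mul_Ioi (n : ℕ) {r : ℝ} (hr : 0 < r) :
    IntegrableOn (fun u : ℝ => u ^ n * exp (-(r * u))) (Ioi 0) :=
  .of_integral_ne_zero (by rw [integral_pow_mul_exp_neg_mul_Ioi n hr]; positivity)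

/-- The Laplace transform at `ρ` of `u ↦ uⁿ exp (-k / u)` on the positive half-line. Up to
elementary factors it is the modified Bessel function `K_{n+1}` at `2√(kρ)`. -/
noncomputable def laplaceMoment (k : ℝ) (n : ℕ) (ρ : ℝ) : ℝ :=
  ∫ u in Ioi (0 : ℝ), u ^ n * exp (-(ρ * u) - k / u)

variable {k : ℝ} (n : ℕ) {ρ : ℝ}

theorem pow_mul_exp_sub_le_pow_mul_exp (hk : 0 ≤ k) {r u : ℝ} (hr : r ≤ ρ) (hu : 0 < u) :
    u ^ n * exp (-(ρ * u) - k / u) ≤ u ^ n * exp (-(r * u)) := by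
  have hru : r * u ≤ ρ * u := by gcongr
  have hku : 0 ≤ k / u := by positivity
  gcongr
  linarith

theorem integrableOn_laplaceMoment (hk : 0 ≤ k) (hρ : 0 < ρ) :
    IntegrableOn (fun u : ℝ => u ^ n * exp (-(ρ * u) - k / u)) (Ioi 0) := by
  refine (integrableOn_pow_mul_exp_neg_mul_Ioi n hρ).mono' (by fun_prop) ?_
  filter_upwards [ae_restrict_mem measurableSet_Ioi] with u (hu : 0 < u)
  rw [norm_of_nonneg (by positivity)]
  exact pow_mul_exp_sub_le_pow_mul_exp n hk le_rfl hu

theorem laplaceMoment_nonneg (k : ℝ) (ρ : ℝ) : 0 ≤ laplaceMoment k n ρ :=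
  setIntegral_nonneg measurableSet_Ioi fun u (hu : 0 < u) => by positivity

theorem laplaceMoment_le (hk : 0 ≤ k) (hρ : 0 < ρ) :
    laplaceMoment k n ρ ≤ n.factorial / ρ ^ (n + 1) := by
  rw [← integral_pow_mul_exp_neg_mul_Ioi n hρ]
  exact setIntegral_mono_on (integrableOn_laplaceMoment n hk hρ)
    (integrableOn_pow_mul_exp_neg_mul_Ioi n hρ) measurableSet_Ioi
    fun u hu => pow_mul_exp_sub_le_pow_mul_exp n hk le_rfl hu

theorem laplaceMoment_zero_left (hρ : 0 < ρ) :
    laplaceMoment 0 n ρ = n.factorial / ρ ^ (n + 1) := by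
  simpa [laplaceMoment] using integral_pow_mul_exp_neg_mul_Ioi n hρ

theorem antitoneOn_laplaceMoment (hk : 0 ≤ k) : AntitoneOn (laplaceMoment k n) (Ioi 0) := by
  intro r hr ρ hρ h
  refine setIntegral_mono_on (integrableOn_laplaceMoment n hk hρ)
    (integrableOn_laplaceMoment n hk hr) measurableSet_Ioi fun u (hu : 0 < u) => ?_
  gcongr

theorem laplaceMoment_mul_left {c : ℝ} (hc : 0 < c) (k ρ : ℝ) :
    laplaceMoment (c * k) n ρ = c ^ (n + 1) * laplaceMoment k n (c * ρ) := by
  have hsubst := integral_comp_mul_left_Ioi' (fun u => u ^ n * exp (-(ρ * u) - c * k / u)) 0 hc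
  simp only [mul_zero, smul_eq_mul] at hsubst
  rw [laplaceMoment, ← hsubst, laplaceMoment, pow_succ', mul_assoc, ← integral_const_mul (c ^ n)]
  congr 2 with u
  rw [mul_div_mul_left _ _ hc.ne', mul_pow]
  ring_nf

theorem hasDerivAt_laplaceMoment (hk : 0 ≤ k) (hρ : 0 < ρ) :
    HasDerivAt (laplaceMoment k n) (-laplaceMoment k (n + 1) ρ) ρ := by
  rw [laplaceMoment, ← integral_neg]
  refine (hasDerivAt_integral_of_dominated_loc_of_deriv_le
    (F := fun ρ u => u ^ n * exp (-(ρ * u) - k / u)) (s := Ioi (ρ / 2))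
    (F' := fun ρ u => -(u ^ (n + 1) * exp (-(ρ * u) - k / u)))
    (bound := fun u => u ^ (n + 1) * exp (-(ρ / 2 * u)))
    (Ioi_mem_nhds (half_lt_self hρ)) (.of_forall fun x => by fun_prop)
    (integrableOn_laplaceMoment n hk hρ) (by fun_prop) ?_
    (integrableOn_pow_mul_exp_neg_mul_Ioi (n + 1) (half_pos hρ)) ?_).2
  · filter_upwards [ae_restrict_mem measurableSet_Ioi] with u (hu : 0 < u) x (hx : ρ / 2 < x)
    rw [norm_neg, norm_of_nonneg (by positivity)]
    exact pow_mul_exp_sub_le_pow_mul_exp (n + 1) hk hx.le hu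
  · refine .of_forall fun u x _ => ?_
    convert! (((hasDerivAt_id x).mul_const u).neg.sub_const (k / u)).exp.const_mul (u ^ n) using 1
    simp only [Pi.neg_apply, id_eq]
    ring

theorem contDiffOn_laplaceMoment (hk : 0 ≤ k) : ContDiffOn ℝ ∞ (laplaceMoment k n) (Ioi 0) := by
  refine contDiffOn_infty.2 fun N => ?_
  induction N generalizing n with
  | zero =>
    exact contDiffOn_zero.2 fun ρ hρ =>
      (hasDerivAt_laplaceMoment n hk hρ).continuousAt.continuousWithinAt
  | succ N ih =>
    rw [Nat.cast_add_one, contDiffOn_succ_iff_deriv_of_isOpen isOpen_Ioi]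
    exact ⟨fun ρ hρ => (hasDerivAt_laplaceMoment n hk hρ).differentiableAt.differentiableWithinAt,
      by simp, (ih (n + 1)).neg.congr fun ρ hρ => (hasDerivAt_laplaceMoment n hk hρ).deriv⟩

theorem hasDerivAt_pow_mul_exp_sub (k ρ : ℝ) {u : ℝ} (hu : u ≠ 0) :
    HasDerivAt (fun u => u ^ (n + 2) * exp (-(ρ * u) - k / u))
      ((n + 2) * (u ^ (n + 1) * exp (-(ρ * u) - k / u)) + k * (u ^ n * exp (-(ρ * u) - k / u))
        - ρ * (u ^ (n + 2) * exp (-(ρ * u) - k / u))) u := by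
  have hexponent : HasDerivAt (fun u => -(ρ * u) - k / u) (-ρ + k / u ^ 2) u := by
    convert! ((hasDerivAt_id u).const_mul ρ).neg.sub ((hasDerivAt_inv hu).const_mul k) using 1
    ring
  convert! (hasDerivAt_pow (n + 2) u).mul hexponent.exp using 1
  push_cast
  field_simp
  ring

theorem continuousWithinAt_pow_succ_mul_exp_sub (hk : 0 ≤ k) (hρ : 0 ≤ ρ) :
    ContinuousWithinAt (fun u => u ^ (n + 1) * exp (-(ρ * u) - k / u)) (Ici 0) 0 := by
  have hpow : Tendsto (fun u : ℝ => u ^ (n + 1)) (𝓝[≥] 0) (𝓝 0) :=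
    ((continuous_pow (n + 1)).tendsto' (0 : ℝ) 0 (by simp)).mono_left nhdsWithin_le_nhds
  rw [ContinuousWithinAt, zero_pow n.succ_ne_zero, zero_mul]
  refine squeeze_zero' ?_ ?_ hpow <;> filter_upwards [self_mem_nhdsWithin] with u (hu : 0 ≤ u)
  · positivity
  · have hρu : 0 ≤ ρ * u := by positivity
    have hku : 0 ≤ k / u := by positivity
    exact mul_le_of_le_one_right (by positivity) (exp_le_one_iff.2 (by linarith))

theorem tendsto_pow_mul_exp_sub_atTop (hk : 0 ≤ k) (hρ : 0 < ρ) :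
    Tendsto (fun u => u ^ n * exp (-(ρ * u) - k / u)) atTop (𝓝 0) := by
  have hlim := tendsto_rpow_mul_exp_neg_mul_atTop_nhds_zero n ρ hρ
  simp only [rpow_natCast, neg_mul] at hlim
  refine squeeze_zero' ?_ ?_ hlim <;> filter_upwards [eventually_gt_atTop 0] with u hu
  · positivity
  · exact pow_mul_exp_sub_le_pow_mul_exp n hk le_rfl hu

-- Integrates the derivative of `u ^ (n + 2) * exp (-(ρ * u) - k / u)`, whose end values vanish.
theorem mul_laplaceMoment_add_two (hk : 0 ≤ k) (hρ : 0 < ρ) :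
    ρ * laplaceMoment k (n + 2) ρ =
      (n + 2) * laplaceMoment k (n + 1) ρ + k * laplaceMoment k n ρ := by
  have hint (m : ℕ) (c : ℝ) :
      IntegrableOn (fun u => c * (u ^ m * exp (-(ρ * u) - k / u))) (Ioi 0) :=
    (integrableOn_laplaceMoment m hk hρ).const_mul c
  have hftc := integral_Ioi_of_hasDerivAt_of_tendsto
    (continuousWithinAt_pow_succ_mul_exp_sub (n + 1) hk hρ.le)
    (fun u hu => hasDerivAt_pow_mul_exp_sub n k ρ (ne_of_gt hu))
    (((hint _ _).add (hint _ _)).sub (hint _ _)) (tendsto_pow_mul_exp_sub_atTop (n + 2) hk hρ)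
  rw [integral_sub (by exact (hint _ _).add (hint _ _)) (hint _ _),
    integral_add (hint _ _) (hint _ _)] at hftc
  simp only [integral_const_mul, zero_pow (Nat.succ_ne_zero _), zero_mul, sub_zero] at hftc
  exact (sub_eq_zero.1 hftc).symm

end LaplaceMoment

section Decay

theorem integral_exp_neg_mul_sub_sq (b c : ℝ) :
    ∫ u : ℝ, exp (-b * (u - c) ^ 2) = √(π / b) := by
  rw [integral_sub_right_eq_self (fun u : ℝ => exp (-b * u ^ 2)), integral_gaussian]

-- Completing the square, `-y²u - c²/u = -2cy - (yu - c)²/u`. The last term is Gaussian near the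
-- maximum `u = c/y` and at least `y²u/4` beyond `u = 2c/y`.
theorem exp_neg_sq_mul_sub_sq_div_le {c y u : ℝ} (hc : 0 < c) (hy : 0 < y) (hu : 0 < u) :
    exp (-(y ^ 2 * u) - c ^ 2 / u) ≤ exp (-2 * c * y) *
      (exp (-(y ^ 3 / (2 * c)) * (u - c / y) ^ 2) + exp (-(y ^ 2 / 4 * u))) := by
  have hsquare : -(y ^ 2 * u) - c ^ 2 / u = -2 * c * y + -((y * u - c) ^ 2 / u) := by
    field_simp
    ring
  rw [hsquare, exp_add]
  gcongr
  rcases le_total (y * u) (2 * c) with hnear | hfar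
  · refine le_add_of_le_of_nonneg (exp_le_exp.2 ?_) (exp_pos _).le
    have hgauss : y ^ 3 / (2 * c) * (u - c / y) ^ 2 = (y * u - c) ^ 2 / (2 * c / y) := by
      field_simp
    rw [neg_mul, neg_le_neg_iff, hgauss]
    gcongr
    rw [le_div_iff₀ hy]
    linarith
  · refine le_add_of_nonneg_of_le (exp_pos _).le (exp_le_exp.2 ?_)
    rw [neg_le_neg_iff, le_div_iff₀ hu]
    nlinarith

theorem laplaceMoment_zero_sq_le {c y : ℝ} (hc : 0 < c) (hy : 0 < y) :
    laplaceMoment (c ^ 2) 0 (y ^ 2) ≤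
      exp (-2 * c * y) * (√(2 * c * π / y ^ 3) + 4 / y ^ 2) := by
  have hgauss : Integrable fun u : ℝ => exp (-(y ^ 3 / (2 * c)) * (u - c / y) ^ 2) :=
    (integrable_exp_neg_mul_sq (by positivity)).comp_sub_right (c / y)
  have hexp := integrableOn_pow_mul_exp_neg_mul_Ioi 0 (show 0 < y ^ 2 / 4 by positivity)
  have hexp_eq := integral_pow_mul_exp_neg_mul_Ioi 0 (show 0 < y ^ 2 / 4 by positivity)
  simp only [pow_zero, one_mul, Nat.factorial_zero, Nat.cast_one, zero_add, pow_one,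
    one_div_div] at hexp hexp_eq
  calc laplaceMoment (c ^ 2) 0 (y ^ 2)
      ≤ ∫ u in Ioi (0 : ℝ), exp (-2 * c * y) *
          (exp (-(y ^ 3 / (2 * c)) * (u - c / y) ^ 2) + exp (-(y ^ 2 / 4 * u))) := by
        refine setIntegral_mono_on (integrableOn_laplaceMoment 0 (by positivity) (by positivity))
          ((hgauss.integrableOn.add hexp).const_mul _) measurableSet_Ioi fun u hu => ?_
        rw [pow_zero, one_mul]
        exact exp_neg_sq_mul_sub_sq_div_le hc hy hu
    _ = exp (-2 * c * y) *
          ((∫ u in Ioi 0, exp (-(y ^ 3 / (2 * c)) * (u - c / y) ^ 2)) + 4 / y ^ 2) := by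
        rw [integral_const_mul, integral_add hgauss.integrableOn hexp, hexp_eq]
    _ ≤ exp (-2 * c * y) * ((∫ u, exp (-(y ^ 3 / (2 * c)) * (u - c / y) ^ 2)) + 4 / y ^ 2) := by
        gcongr _ * (?_ + _)
        exact setIntegral_le_integral hgauss (.of_forall fun u => (exp_pos _).le)
    _ = exp (-2 * c * y) * (√(2 * c * π / y ^ 3) + 4 / y ^ 2) := by
        rw [integral_exp_neg_mul_sub_sq, div_div_eq_mul_div, mul_comm π]

theorem mul_laplaceMoment_zero_sq_le {c y : ℝ} (hc : 0 < c) (hy : 1 ≤ y) :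
    y * laplaceMoment (c ^ 2) 0 (y ^ 2) ≤ (√(2 * c * π) + 4) * exp (-2 * c * y) / √y := by
  have hy0 : 0 < y := one_pos.trans_le hy
  have hsqrt_le : √y ≤ y := sqrt_le_iff.2 ⟨hy0.le, by nlinarith⟩
  have hsqrt_cube : √(2 * c * π / y ^ 3) = √(2 * c * π) / (y * √y) := by
    rw [sqrt_div (by positivity), pow_succ, sqrt_mul (sq_nonneg y), sqrt_sq hy0.le]
  calc y * laplaceMoment (c ^ 2) 0 (y ^ 2)
      ≤ y * (exp (-2 * c * y) * (√(2 * c * π) / (y * √y) + 4 / (y * y))) := by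
        rw [← hsqrt_cube, ← sq]
        gcongr
        exact laplaceMoment_zero_sq_le hc hy0
    _ ≤ y * (exp (-2 * c * y) * (√(2 * c * π) / (y * √y) + 4 / (y * √y))) := by gcongr
    _ = (√(2 * c * π) + 4) * exp (-2 * c * y) / √y := by field_simp

end Decay

section HalfPlaneConvolution

variable {E : Type*} [NormedAddCommGroup E] [NormedSpace ℝ E] {g : ℝ → ℝ} {φ : ℂ → E} {z : ℂ}

/-- Smoothness on the open upper half-plane, with derivatives of every order bounded away from the
real line. Convolution along the real line with an integrable function preserves the equations
satisfied by such a kernel. -/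
structure HasBoundedDerivs (φ : ℂ → E) : Prop where
  contDiffOn : ContDiffOn ℝ ∞ φ upperHalfPlaneSet
  exists_norm_iteratedFDeriv_le : ∀ (n : ℕ) {δ : ℝ}, 0 < δ →
    ∃ C, ∀ z : ℂ, δ ≤ z.im → ‖iteratedFDeriv ℝ n φ z‖ ≤ C

namespace HasBoundedDerivs

theorem exists_norm_le (hφ : HasBoundedDerivs φ) {δ : ℝ} (hδ : 0 < δ) :
    ∃ C, ∀ z : ℂ, δ ≤ z.im → ‖φ z‖ ≤ C := by
  simpa only [norm_iteratedFDeriv_zero] using hφ.exists_norm_iteratedFDeriv_le 0 hδ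

theorem fderiv (hφ : HasBoundedDerivs φ) : HasBoundedDerivs (fderiv ℝ φ) where
  contDiffOn := ((contDiffOn_infty_iff_fderiv_of_isOpen isOpen_upperHalfPlaneSet).1
    hφ.contDiffOn).2
  exists_norm_iteratedFDeriv_le n _ hδ := by
    simpa only [norm_iteratedFDeriv_fderiv] using hφ.exists_norm_iteratedFDeriv_le (n + 1) hδ

theorem contDiffAt (hφ : HasBoundedDerivs φ) (hz : 0 < z.im) : ContDiffAt ℝ ∞ φ z :=
  hφ.contDiffOn.contDiffAt (isOpen_upperHalfPlaneSet.mem_nhds hz)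

theorem const_smul (hφ : HasBoundedDerivs φ) (c : ℝ) : HasBoundedDerivs (c • φ) where
  contDiffOn := hφ.contDiffOn.const_smul c
  exists_norm_iteratedFDeriv_le n δ hδ := by
    obtain ⟨C, hC⟩ := hφ.exists_norm_iteratedFDeriv_le n hδ
    refine ⟨‖c‖ * C, fun z hz => ?_⟩
    rw [iteratedFDeriv_const_smul_apply, norm_smul]
    · gcongr
      exact hC z hz
    · exact (hφ.contDiffAt (hδ.trans_le hz)).of_le (mod_cast le_top)

theorem hasFDerivAt (hφ : HasBoundedDerivs φ) (hz : 0 < z.im) :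
    HasFDerivAt φ (_root_.fderiv ℝ φ z) z :=
  ((hφ.contDiffAt hz).differentiableAt (by simp)).hasFDerivAt

theorem continuous_horizontal (hφ : HasBoundedDerivs φ) (hz : 0 < z.im) :
    Continuous fun t : ℝ => φ (z - t) :=
  hφ.contDiffOn.continuousOn.comp_continuous (by fun_prop) fun t => by simpa using hz

theorem integrable_smul (hφ : HasBoundedDerivs φ) (hg : Integrable g) (hz : 0 < z.im) :
    Integrable fun t : ℝ => g t • φ (z - t) := by
  obtain ⟨C, hC⟩ := hφ.exists_norm_le hz
  exact hg.smul_bdd C (hφ.continuous_horizontal hz).aestronglyMeasurable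
    (.of_forall fun t => hC _ (by simp))

end HasBoundedDerivs

/-- Convolution of a function on the real line with a kernel on the complex plane, along
horizontal lines. -/
noncomputable def horizontalConv (g : ℝ → ℝ) (φ : ℂ → E) (z : ℂ) : E :=
  ∫ t : ℝ, g t • φ (z - t)

theorem norm_horizontalConv_le (hg : Integrable g) {B : ℝ} (hB : ∀ t : ℝ, ‖φ (z - t)‖ ≤ B) :
    ‖horizontalConv g φ z‖ ≤ (∫ t, |g t|) * B := by
  rw [← integral_mul_const]
  refine norm_integral_le_of_norm_le (hg.abs.mul_const B) (.of_forall fun t => ?_)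
  rw [norm_smul, Real.norm_eq_abs]
  gcongr
  exact hB t

theorem hasFDerivAt_horizontalConv (hg : Integrable g) (hφ : HasBoundedDerivs φ) (hz : 0 < z.im) :
    HasFDerivAt (horizontalConv g φ) (horizontalConv g (fderiv ℝ φ) z) z := by
  obtain ⟨C, hC⟩ := hφ.fderiv.exists_norm_le (half_pos hz)
  have hpos {w : ℂ} (hw : z.im / 2 < w.im) : 0 < w.im := (half_pos hz).trans hw
  have hU : {w : ℂ | z.im / 2 < w.im} ∈ 𝓝 z := (Complex.isOpen_im_gt _).mem_nhds (half_lt_self hz)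
  refine hasFDerivAt_integral_of_dominated_of_fderiv_le (𝕜 := ℝ) hU
    (F' := fun w t => g t • fderiv ℝ φ (w - t)) (bound := fun t => |g t| * C)
    ?_ (hφ.integrable_smul hg hz) (hφ.fderiv.integrable_smul hg hz).aestronglyMeasurable
    (.of_forall fun t w hw => ?_) (hg.abs.mul_const C) (.of_forall fun t w hw => ?_)
  · filter_upwards [hU] with w hw using (hφ.integrable_smul hg (hpos hw)).aestronglyMeasurable
  · rw [norm_smul, Real.norm_eq_abs]
    gcongr
    exact hC _ (by simpa using hw.le)
  · have hwt : 0 < (w - t).im := by simpa using hpos hw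
    exact ((hasFDerivAt_comp_sub (t : ℂ)).2 (hφ.hasFDerivAt hwt)).const_smul (g t)

theorem fderiv_horizontalConv_eqOn (hg : Integrable g) (hφ : HasBoundedDerivs φ) :
    EqOn (fderiv ℝ (horizontalConv g φ)) (horizontalConv g (fderiv ℝ φ)) upperHalfPlaneSet :=
  fun _ hz => (hasFDerivAt_horizontalConv hg hφ hz).fderiv

theorem contDiffOn_horizontalConv (hg : Integrable g) (hφ : HasBoundedDerivs φ) :
    ContDiffOn ℝ ∞ (horizontalConv g φ) upperHalfPlaneSet := by
  refine contDiffOn_infty.2 fun N => ?_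
  induction N generalizing E with
  | zero =>
    exact contDiffOn_zero.2 fun z hz =>
      (hasFDerivAt_horizontalConv hg hφ hz).continuousAt.continuousWithinAt
  | succ N ih =>
    rw [Nat.cast_add_one, contDiffOn_succ_iff_fderiv_of_isOpen isOpen_upperHalfPlaneSet]
    exact ⟨fun z hz =>
      (hasFDerivAt_horizontalConv hg hφ hz).differentiableAt.differentiableWithinAt, by simp,
      (ih hφ.fderiv).congr (fderiv_horizontalConv_eqOn hg hφ)⟩

theorem fderiv_fderiv_horizontalConv (hg : Integrable g) (hφ : HasBoundedDerivs φ)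
    (hz : 0 < z.im) :
    fderiv ℝ (fderiv ℝ (horizontalConv g φ)) z =
      horizontalConv g (fderiv ℝ (fderiv ℝ φ)) z := by
  rw [((fderiv_horizontalConv_eqOn hg hφ).eventuallyEq_of_mem
    (isOpen_upperHalfPlaneSet.mem_nhds hz)).fderiv_eq]
  exact fderiv_horizontalConv_eqOn hg hφ.fderiv hz

theorem lap_eq_fderiv_fderiv (u : ℂ → ℝ) (z : ℂ) :
    lap u z = 1 / 4 * (fderiv ℝ (fderiv ℝ u) z 1 1 +
      fderiv ℝ (fderiv ℝ u) z Complex.I Complex.I) := by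
  simp only [lap, iteratedFDeriv_two_apply, Matrix.cons_val_zero, Matrix.cons_val_one]

theorem lap_horizontalConv {φ : ℂ → ℝ} (hg : Integrable g) (hφ : HasBoundedDerivs φ)
    (hz : 0 < z.im) : lap (horizontalConv g φ) z = horizontalConv g (lap φ) z := by
  have hint := hφ.fderiv.fderiv.integrable_smul hg hz
  have happly (v : ℂ) : horizontalConv g (fderiv ℝ (fderiv ℝ φ)) z v v =
      ∫ t, g t * fderiv ℝ (fderiv ℝ φ) (z - t) v v := by
    rw [horizontalConv, ContinuousLinearMap.integral_apply hint,
      ContinuousLinearMap.integral_apply (hint.apply_continuousLinearMap v)]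
    rfl
  have hint_apply (v : ℂ) : Integrable fun t => g t * fderiv ℝ (fderiv ℝ φ) (z - t) v v :=
    (hint.apply_continuousLinearMap v).apply_continuousLinearMap v
  rw [lap_eq_fderiv_fderiv, fderiv_fderiv_horizontalConv hg hφ hz, happly, happly,
    ← integral_add (hint_apply 1) (hint_apply Complex.I), ← integral_const_mul, horizontalConv]
  congr 1 with t
  rw [lap_eq_fderiv_fderiv, smul_eq_mul]
  ring

end HalfPlaneConvolution

section MomentKernel

open Complex (reCLM imCLM)

variable {k : ℝ} {a b n : ℕ} {z : ℂ}

/-- The kernel `x ^ a * y ^ b * laplaceMoment k n (x ^ 2 + y ^ 2)` at `z = x + iy`. For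
`a + b ≤ 2 * n + 2` these kernels form a class that is bounded away from the real line and closed
under differentiation. -/
noncomputable def momentKernel (k : ℝ) (a b n : ℕ) (z : ℂ) : ℝ :=
  z.re ^ a * z.im ^ b * laplaceMoment k n (z.re ^ 2 + z.im ^ 2)

theorem contDiffOn_momentKernel (hk : 0 ≤ k) (a b n : ℕ) :
    ContDiffOn ℝ ∞ (momentKernel k a b n) upperHalfPlaneSet := by
  have hre : ContDiff ℝ ∞ fun z : ℂ => z.re := reCLM.contDiff
  have him : ContDiff ℝ ∞ fun z : ℂ => z.im := imCLM.contDiff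
  refine ((hre.pow a).mul (him.pow b)).contDiffOn.mul ((contDiffOn_laplaceMoment n hk).comp
    ((hre.pow 2).add (him.pow 2)).contDiffOn fun z (hz : 0 < z.im) => ?_)
  change 0 < z.re ^ 2 + z.im ^ 2
  positivity

theorem norm_momentKernel_le (hk : 0 ≤ k) (hab : a + b ≤ 2 * n + 2) {δ : ℝ} (hδ : 0 < δ)
    (hz : δ ≤ z.im) : ‖momentKernel k a b n z‖ ≤ n.factorial / δ ^ (2 * n + 2 - (a + b)) := by
  have hδz : δ ≤ ‖z‖ := hz.trans ((le_abs_self _).trans (Complex.abs_im_le_norm z))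
  have hz0 : 0 < ‖z‖ := hδ.trans_le hδz
  have hnorm : z.re ^ 2 + z.im ^ 2 = ‖z‖ ^ 2 := by rw [Complex.sq_norm, Complex.normSq_apply]; ring
  rw [momentKernel, hnorm, norm_mul, norm_mul, norm_pow, norm_pow,
    norm_of_nonneg (laplaceMoment_nonneg ..)]
  calc |z.re| ^ a * |z.im| ^ b * laplaceMoment k n (‖z‖ ^ 2)
      ≤ ‖z‖ ^ a * ‖z‖ ^ b * (n.factorial / (‖z‖ ^ 2) ^ (n + 1)) := by
        gcongr
        · exact laplaceMoment_nonneg ..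
        · exact Complex.abs_re_le_norm z
        · exact Complex.abs_im_le_norm z
        · exact laplaceMoment_le n hk (by positivity)
    _ = n.factorial / ‖z‖ ^ (2 * n + 2 - (a + b)) := by
        rw [← pow_mul, mul_add_one, mul_div_assoc', div_eq_div_iff (by positivity) (by positivity),
          ← Nat.sub_add_cancel hab, Nat.add_sub_cancel]
        ring
    _ ≤ n.factorial / δ ^ (2 * n + 2 - (a + b)) := by gcongr

theorem hasFDerivAt_momentKernel (hk : 0 ≤ k) (a b n : ℕ) (hz : 0 < z.im) :
    HasFDerivAt (momentKernel k a b n)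
      (momentKernel k (a - 1) b n z • (a : ℝ) • reCLM +
        momentKernel k (a + 1) b (n + 1) z • (-2 : ℝ) • reCLM +
        momentKernel k a (b - 1) n z • (b : ℝ) • imCLM +
        momentKernel k a (b + 1) (n + 1) z • (-2 : ℝ) • imCLM) z := by
  have hre : HasFDerivAt (fun w : ℂ => w.re) reCLM z := reCLM.hasFDerivAt
  have him : HasFDerivAt (fun w : ℂ => w.im) imCLM z := imCLM.hasFDerivAt
  have hmoment := (hasDerivAt_laplaceMoment n hk (show 0 < z.re ^ 2 + z.im ^ 2 by positivity))
    |>.comp_hasFDerivAt z ((hre.pow 2).add (him.pow 2))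
  refine (((hre.pow a).mul (him.pow b)).mul hmoment).congr_fderiv ?_
  ext1 v
  simp only [momentKernel, Pi.mul_apply, Pi.add_apply, Function.comp_apply, add_apply, smul_apply,
    neg_smul, neg_apply, Complex.reCLM_apply, Complex.imCLM_apply, smul_eq_mul, nsmul_eq_mul,
    Nat.add_one_sub_one, Nat.cast_ofNat, pow_one]
  ring

theorem norm_iteratedFDeriv_smul_const_le {E F : Type*} [NormedAddCommGroup E] [NormedSpace ℝ E]
    [NormedAddCommGroup F] [NormedSpace ℝ F] {f : E → ℝ} {x : E} {N : ℕ}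
    (hf : ContDiffAt ℝ N f x) (v : F) :
    ‖iteratedFDeriv ℝ N (fun y => f y • v) x‖ ≤ ‖v‖ * ‖iteratedFDeriv ℝ N f x‖ := by
  rw [← ContinuousLinearMap.norm_toSpanSingleton (𝕜 := ℝ) v]
  exact (ContinuousLinearMap.toSpanSingleton ℝ v).norm_iteratedFDeriv_comp_left hf le_rfl

theorem norm_iteratedFDeriv_succ_momentKernel_le (hk : 0 ≤ k) (a b n N : ℕ) (hz : 0 < z.im) :
    ‖iteratedFDeriv ℝ (N + 1) (momentKernel k a b n) z‖ ≤
      a * ‖iteratedFDeriv ℝ N (momentKernel k (a - 1) b n) z‖ +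
      2 * ‖iteratedFDeriv ℝ N (momentKernel k (a + 1) b (n + 1)) z‖ +
      b * ‖iteratedFDeriv ℝ N (momentKernel k a (b - 1) n) z‖ +
      2 * ‖iteratedFDeriv ℝ N (momentKernel k a (b + 1) (n + 1)) z‖ := by
  have hU : upperHalfPlaneSet ∈ 𝓝 z := isOpen_upperHalfPlaneSet.mem_nhds hz
  have hfderiv := eventually_of_mem hU fun w hw => (hasFDerivAt_momentKernel hk a b n hw).fderiv
  have hsmooth (a b n : ℕ) : ContDiffAt ℝ N (momentKernel k a b n) z :=
    ((contDiffOn_momentKernel hk a b n).contDiffAt hU).of_le (mod_cast le_top)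
  have hsmul {a b n : ℕ} {v : ℂ →L[ℝ] ℝ} :
      ContDiffAt ℝ N (fun w => momentKernel k a b n w • v) z :=
    (hsmooth a b n).smul contDiffAt_const
  have hterm {a b n : ℕ} {c d : ℝ} {v : ℂ →L[ℝ] ℝ} (hc : |c| = d) (hv : ‖v‖ = 1) :
      ‖iteratedFDeriv ℝ N (fun w => momentKernel k a b n w • c • v) z‖ ≤
        d * ‖iteratedFDeriv ℝ N (momentKernel k a b n) z‖ := by
    simpa only [norm_smul, hv, mul_one, Real.norm_eq_abs, hc] using
      norm_iteratedFDeriv_smul_const_le (hsmooth a b n) (c • v)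
  rw [← norm_iteratedFDeriv_fderiv, (EventuallyEq.iteratedFDeriv ℝ hfderiv N).eq_of_nhds,
    fun_iteratedFDeriv_add_apply ((hsmul.add hsmul).add hsmul) hsmul,
    fun_iteratedFDeriv_add_apply (hsmul.add hsmul) hsmul, fun_iteratedFDeriv_add_apply hsmul hsmul]
  have habs : |(-2 : ℝ)| = 2 := by norm_num
  refine norm_add₄_le.trans ?_
  gcongr ?_ + ?_ + ?_ + ?_
  exacts [hterm (Nat.abs_cast a) Complex.reCLM_norm, hterm habs Complex.reCLM_norm,
    hterm (Nat.abs_cast b) Complex.imCLM_norm, hterm habs Complex.imCLM_norm]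

theorem exists_norm_iteratedFDeriv_momentKernel_le (hk : 0 ≤ k) (N : ℕ)
    (hab : a + b ≤ 2 * n + 2) {δ : ℝ} (hδ : 0 < δ) :
    ∃ C, ∀ z : ℂ, δ ≤ z.im → ‖iteratedFDeriv ℝ N (momentKernel k a b n) z‖ ≤ C := by
  induction N generalizing a b n with
  | zero => exact ⟨_, fun z hz => by
      simpa only [norm_iteratedFDeriv_zero] using norm_momentKernel_le hk hab hδ hz⟩
  | succ N ih =>
    obtain ⟨C₁, hC₁⟩ := ih (a := a - 1) (b := b) (n := n) (by lia)
    obtain ⟨C₂, hC₂⟩ := ih (a := a + 1) (b := b) (n := n + 1) (by lia)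
    obtain ⟨C₃, hC₃⟩ := ih (a := a) (b := b - 1) (n := n) (by lia)
    obtain ⟨C₄, hC₄⟩ := ih (a := a) (b := b + 1) (n := n + 1) (by lia)
    refine ⟨a * C₁ + 2 * C₂ + b * C₃ + 2 * C₄, fun z hz => ?_⟩
    refine (norm_iteratedFDeriv_succ_momentKernel_le hk a b n N (hδ.trans_le hz)).trans ?_
    gcongr
    exacts [hC₁ z hz, hC₂ z hz, hC₃ z hz, hC₄ z hz]

theorem hasBoundedDerivs_momentKernel (hk : 0 ≤ k) (hab : a + b ≤ 2 * n + 2) :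
    HasBoundedDerivs (momentKernel k a b n) where
  contDiffOn := contDiffOn_momentKernel hk a b n
  exists_norm_iteratedFDeriv_le N _ hδ := exists_norm_iteratedFDeriv_momentKernel_le hk N hab hδ

theorem lap_momentKernel_zero_one_zero (hk : 0 ≤ k) (hz : 0 < z.im) :
    lap (momentKernel k 0 1 0) z = k * momentKernel k 0 1 0 z := by
  have hfderiv : fderiv ℝ (momentKernel k 0 1 0) =ᶠ[𝓝 z] fun w =>
      momentKernel k 1 1 1 w • (-2 : ℝ) • reCLM + momentKernel k 0 0 0 w • imCLM +
        momentKernel k 0 2 1 w • (-2 : ℝ) • imCLM := by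
    filter_upwards [isOpen_upperHalfPlaneSet.mem_nhds hz] with w hw
    simpa using (hasFDerivAt_momentKernel hk 0 1 0 hw).fderiv
  have hmoment := mul_laplaceMoment_add_two 0 hk (show 0 < z.re ^ 2 + z.im ^ 2 by positivity)
  rw [lap_eq_fderiv_fderiv, hfderiv.fderiv_eq,
    HasFDerivAt.fderiv <|
      (((hasFDerivAt_momentKernel hk 1 1 1 hz).smul_const ((-2 : ℝ) • reCLM)).fun_add
        ((hasFDerivAt_momentKernel hk 0 0 0 hz).smul_const imCLM)).fun_add
        ((hasFDerivAt_momentKernel hk 0 2 1 hz).smul_const ((-2 : ℝ) • imCLM))]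
  simp only [momentKernel, add_apply, smul_apply, ContinuousLinearMap.smulRight_apply,
    Complex.reCLM_apply, Complex.imCLM_apply, Complex.one_re, Complex.one_im, Complex.I_re,
    Complex.I_im, smul_eq_mul, zero_add, tsub_self, zero_tsub, Nat.reduceAdd, Nat.reduceSub,
    Nat.cast_zero, Nat.cast_one, Nat.cast_ofNat] at hmoment ⊢
  linear_combination z.im * hmoment

end MomentKernel

section ScreenedPoissonExtension

variable {k : ℝ} {g : ℝ → ℝ} {z : ℂ}

/-- The Poisson kernel `π⁻¹ y ∫₀^∞ exp (-|z|²u - k/u) du` of the operator `lap - k` on the upper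
half-plane, where `z = x + iy`. For `k = 0` it is the usual Poisson kernel `π⁻¹ y / |z|²`. -/
noncomputable def screenedPoissonKernel (k : ℝ) : ℂ → ℝ :=
  π⁻¹ • momentKernel k 0 1 0

theorem screenedPoissonKernel_apply (k : ℝ) (z : ℂ) :
    screenedPoissonKernel k z = π⁻¹ * (z.im * laplaceMoment k 0 (z.re ^ 2 + z.im ^ 2)) := by
  simp [screenedPoissonKernel, momentKernel]

theorem hasBoundedDerivs_screenedPoissonKernel (hk : 0 ≤ k) :
    HasBoundedDerivs (screenedPoissonKernel k) :=
  (hasBoundedDerivs_momentKernel hk (by norm_num)).const_smul _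

theorem lap_const_smul {u : ℂ → ℝ} (hu : ContDiffAt ℝ 2 u z) (c : ℝ) :
    lap (c • u) z = c * lap u z := by
  simp only [lap, iteratedFDeriv_const_smul_apply hu, smul_apply, smul_eq_mul]
  ring

theorem lap_screenedPoissonKernel (hk : 0 ≤ k) (hz : 0 < z.im) :
    lap (screenedPoissonKernel k) z = k * screenedPoissonKernel k z := by
  have hsmooth := (hasBoundedDerivs_momentKernel (a := 0) (b := 1) (n := 0) hk
    (by norm_num)).contDiffAt hz
  rw [screenedPoissonKernel, lap_const_smul (hsmooth.of_le ENat.LEInfty.out),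
    lap_momentKernel_zero_one_zero hk hz, Pi.smul_apply, smul_eq_mul, mul_left_comm]

theorem screenedPoissonKernel_nonneg (k : ℝ) (hz : 0 ≤ z.im) : 0 ≤ screenedPoissonKernel k z := by
  rw [screenedPoissonKernel_apply]
  exact mul_nonneg (by positivity) (mul_nonneg hz (laplaceMoment_nonneg ..))

theorem screenedPoissonKernel_add_I_le (hk : 0 ≤ k) (τ : ℝ) :
    screenedPoissonKernel k (τ + Complex.I) ≤ π⁻¹ * (1 + τ ^ 2)⁻¹ := by
  have hmoment := laplaceMoment_le 0 hk (show 0 < τ ^ 2 + 1 by positivity)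
  simp only [Nat.factorial_zero, Nat.cast_one, zero_add, pow_one, one_div] at hmoment
  simp only [screenedPoissonKernel_apply, Complex.add_re, Complex.add_im, Complex.ofReal_re,
    Complex.ofReal_im, Complex.I_re, Complex.I_im, add_zero, zero_add, one_pow, one_mul]
  rw [add_comm 1]
  gcongr

theorem screenedPoissonKernel_zero_add_I (τ : ℝ) :
    screenedPoissonKernel 0 (τ + Complex.I) = π⁻¹ * (1 + τ ^ 2)⁻¹ := by
  simp [screenedPoissonKernel_apply, laplaceMoment_zero_left 0 (show 0 < τ ^ 2 + 1 by positivity),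
    add_comm]

theorem screenedPoissonKernel_mul_sq (k : ℝ) {y : ℝ} (hy : 0 < y) (w : ℂ) :
    screenedPoissonKernel (k * y ^ 2) w = y * screenedPoissonKernel k (y * w) := by
  rw [screenedPoissonKernel_apply, screenedPoissonKernel_apply, mul_comm k,
    laplaceMoment_mul_left 0 (by positivity), Complex.re_ofReal_mul, Complex.im_ofReal_mul]
  ring_nf

theorem continuous_screenedPoissonKernel_mul_sq_add_I (hk : 0 ≤ k) :
    Continuous fun p : ℝ × ℝ => screenedPoissonKernel (k * p.1 ^ 2) (p.2 + Complex.I) := by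
  have hmoment : Continuous fun p : ℝ × ℝ => laplaceMoment (k * p.1 ^ 2) 0 (p.2 ^ 2 + 1) := by
    refine continuous_of_dominated (bound := fun u => u ^ 0 * exp (-(1 * u)))
      (fun p => by fun_prop) (fun p => ?_) (integrableOn_pow_mul_exp_neg_mul_Ioi 0 one_pos)
      (.of_forall fun u => by fun_prop)
    filter_upwards [ae_restrict_mem measurableSet_Ioi] with u (hu : 0 < u)
    rw [norm_of_nonneg (by positivity)]
    exact pow_mul_exp_sub_le_pow_mul_exp 0 (by positivity) (by linarith [sq_nonneg p.2]) hu
  simpa [screenedPoissonKernel_apply] using hmoment.const_mul π⁻¹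

/-- The solution of `lap h = k * h` on the upper half-plane with boundary values `g`, that is
`horizontalConv g (screenedPoissonKernel k)`. The integral is taken in the rescaled variable
`τ = (x - t) / y`, in which it makes sense and is continuous also at `y = 0`. -/
noncomputable def screenedPoissonExtension (k : ℝ) (g : ℝ → ℝ) (z : ℂ) : ℝ :=
  ∫ τ : ℝ, screenedPoissonKernel (k * z.im ^ 2) (τ + Complex.I) * g (z.re - z.im * τ)

theorem integral_inv_pi_mul_inv_one_add_sq : ∫ τ : ℝ, π⁻¹ * (1 + τ ^ 2)⁻¹ = 1 := by
  rw [integral_const_mul, integral_univ_inv_one_add_sq, inv_mul_cancel₀ pi_ne_zero]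

theorem continuous_screenedPoissonExtension (hk : 0 ≤ k) (hg : Continuous g) {M : ℝ}
    (hM : ∀ x, |g x| ≤ M) : Continuous (screenedPoissonExtension k g) := by
  have hkernel := continuous_screenedPoissonKernel_mul_sq_add_I hk
  refine continuous_of_dominated (bound := fun τ => π⁻¹ * (1 + τ ^ 2)⁻¹ * M)
    (fun z => ?_) (fun z => .of_forall fun τ => ?_)
    ((integrable_inv_one_add_sq.const_mul _).mul_const M) (.of_forall fun τ => ?_)
  · exact ((hkernel.comp (Continuous.prodMk_right z.im)).mul
      (hg.comp (by fun_prop))).aestronglyMeasurable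
  · rw [norm_mul, norm_of_nonneg (screenedPoissonKernel_nonneg _ (by simp))]
    gcongr
    · exact screenedPoissonKernel_add_I_le (by positivity) τ
    · exact hM _
  · exact (hkernel.comp (Complex.continuous_im.prodMk continuous_const)).mul
      (hg.comp (Complex.continuous_re.sub (Complex.continuous_im.mul continuous_const)))

theorem screenedPoissonExtension_ofReal (k : ℝ) (g : ℝ → ℝ) (x : ℝ) :
    screenedPoissonExtension k g x = g x := by
  simp [screenedPoissonExtension, screenedPoissonKernel_zero_add_I, integral_mul_const,
    integral_const_mul]

theorem screenedPoissonExtension_nonneg (k : ℝ) (hg : ∀ x, 0 ≤ g x) (z : ℂ) :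
    0 ≤ screenedPoissonExtension k g z :=
  integral_nonneg fun _ => mul_nonneg (screenedPoissonKernel_nonneg _ (by simp)) (hg _)

theorem screenedPoissonExtension_le (hk : 0 ≤ k) (hg : ∀ x, 0 ≤ g x) {M : ℝ} (hM : ∀ x, g x ≤ M)
    (z : ℂ) : screenedPoissonExtension k g z ≤ M := by
  rw [← one_mul M, ← integral_inv_pi_mul_inv_one_add_sq, ← integral_mul_const]
  refine integral_mono_of_nonneg
    (.of_forall fun _ => mul_nonneg (screenedPoissonKernel_nonneg _ (by simp)) (hg _))
    ((integrable_inv_one_add_sq.const_mul _).mul_const M) (.of_forall fun τ => ?_)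
  exact mul_le_mul (screenedPoissonKernel_add_I_le (by positivity) τ) (hM _) (hg _) (by positivity)

theorem screenedPoissonExtension_eq_horizontalConv (k : ℝ) (g : ℝ → ℝ) (hz : 0 < z.im) :
    screenedPoissonExtension k g z = horizontalConv g (screenedPoissonKernel k) z := by
  let F (s : ℝ) : ℝ := screenedPoissonKernel k (s + z.im * Complex.I) * g (z.re - s)
  calc screenedPoissonExtension k g z = ∫ τ, z.im * F (z.im * τ) := by
        refine integral_congr_ae (.of_forall fun τ => ?_)
        simp only [F]
        rw [screenedPoissonKernel_mul_sq k hz, mul_assoc, mul_add, Complex.ofReal_mul]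
    _ = ∫ s, F s := by
        rw [integral_const_mul, Measure.integral_comp_mul_left, abs_of_pos (inv_pos.2 hz),
          smul_eq_mul, mul_inv_cancel_left₀ hz.ne']
    _ = ∫ t, F (z.re - t) := (integral_sub_left_eq_self F volume z.re).symm
    _ = horizontalConv g (screenedPoissonKernel k) z := by
        congr 1 with t
        have hpoint : ((z.re - t : ℝ) : ℂ) + z.im * Complex.I = z - t := by
          rw [Complex.ofReal_sub, sub_add_eq_add_sub, Complex.re_add_im]
        simp only [F, hpoint, sub_sub_cancel, smul_eq_mul, mul_comm (g t)]

theorem contDiffOn_screenedPoissonExtension (hk : 0 ≤ k) (hg : Integrable g) :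
    ContDiffOn ℝ ∞ (screenedPoissonExtension k g) upperHalfPlaneSet :=
  (contDiffOn_horizontalConv hg (hasBoundedDerivs_screenedPoissonKernel hk)).congr
    fun _ hz => screenedPoissonExtension_eq_horizontalConv k g hz

theorem lap_screenedPoissonExtension (hk : 0 ≤ k) (hg : Integrable g) (hz : 0 < z.im) :
    lap (screenedPoissonExtension k g) z = k * screenedPoissonExtension k g z := by
  have hconv : screenedPoissonExtension k g =ᶠ[𝓝 z] horizontalConv g (screenedPoissonKernel k) :=
    eventually_of_mem (isOpen_upperHalfPlaneSet.mem_nhds hz)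
      fun w hw => screenedPoissonExtension_eq_horizontalConv k g hw
  have hlap := lap_horizontalConv hg (hasBoundedDerivs_screenedPoissonKernel hk) hz
  rw [lap, (hconv.iteratedFDeriv ℝ 2).eq_of_nhds, ← lap, hlap, hconv.eq_of_nhds, horizontalConv,
    horizontalConv, ← integral_const_mul]
  congr 1 with t
  rw [lap_screenedPoissonKernel hk (by simpa using hz), smul_eq_mul, smul_eq_mul, mul_left_comm]

theorem screenedPoissonKernel_le (hk : 0 < k) (hz : 1 ≤ z.im) :
    screenedPoissonKernel k z ≤ π⁻¹ * ((√(2 * √k * π) + 4) * exp (-2 * √k * z.im) / √z.im) := by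
  have hz0 : 0 < z.im := one_pos.trans_le hz
  have hdecay := mul_laplaceMoment_zero_sq_le (sqrt_pos.2 hk) hz
  rw [sq_sqrt hk.le] at hdecay
  rw [screenedPoissonKernel_apply]
  gcongr
  refine le_trans ?_ hdecay
  gcongr
  exact antitoneOn_laplaceMoment 0 hk.le (mem_Ioi.2 (pow_pos hz0 2)) (mem_Ioi.2 (by positivity))
    (le_add_of_nonneg_left (sq_nonneg _))

theorem screenedPoissonExtension_le_exp (hk : 0 < k) (hg : Integrable g) (hz : 1 ≤ z.im) :
    screenedPoissonExtension k g z ≤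
      π⁻¹ * (√(2 * √k * π) + 4) * (∫ t, |g t|) * exp (-2 * √k * z.im) / √z.im := by
  rw [screenedPoissonExtension_eq_horizontalConv k g (one_pos.trans_le hz)]
  have hkernel (t : ℝ) : ‖screenedPoissonKernel k (z - t)‖ ≤
      π⁻¹ * ((√(2 * √k * π) + 4) * exp (-2 * √k * z.im) / √z.im) := by
    rw [norm_of_nonneg (screenedPoissonKernel_nonneg k (by simpa using zero_le_one.trans hz))]
    simpa using screenedPoissonKernel_le (z := z - t) hk (by simpa using hz)
  refine (le_abs_self _).trans ((norm_horizontalConv_le hg hkernel).trans_eq ?_)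
  ring

end ScreenedPoissonExtension

/-- **Half-plane Bessel-type barrier.** For every `k > 0` there is `C > 0` (depending
only on `k`) such that for every continuous, bounded, nonnegative, integrable
`g : ℝ → ℝ` there is `h`, smooth on the open upper half-plane and continuous on its
closure, with `Δh = k h`, boundary value `g`, `0 ≤ h ≤ sup g`, and
`h(x+iy) ≤ C ‖g‖₁ e^{−2√k y}/√y` for `y ≥ 1`. -/
theorem stmt_6 (k : ℝ) (hk : 0 < k) :
    ∃ C : ℝ, 0 < C ∧
      ∀ g : ℝ → ℝ, Continuous g → (∃ M : ℝ, ∀ x : ℝ, g x ≤ M) →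
        (∀ x : ℝ, 0 ≤ g x) → MeasureTheory.Integrable g →
        ∃ h : ℂ → ℝ,
          ContDiffOn ℝ (⊤ : ℕ∞) h {z : ℂ | 0 < z.im} ∧
          ContinuousOn h {z : ℂ | 0 ≤ z.im} ∧
          (∀ z : ℂ, 0 < z.im → lap h z = k * h z) ∧
          (∀ x : ℝ, h (x : ℂ) = g x) ∧
          (∀ z : ℂ, 0 ≤ z.im → 0 ≤ h z ∧ h z ≤ ⨆ x : ℝ, g x) ∧
          (∀ x y : ℝ, 1 ≤ y →
            h ((x : ℂ) + (y : ℂ) * Complex.I) ≤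
              C * (∫ t : ℝ, |g t|) * Real.exp (-2 * Real.sqrt k * y) / Real.sqrt y) := by
  refine ⟨π⁻¹ * (√(2 * √k * π) + 4), by positivity, fun g hg ⟨M, hM⟩ hg0 hgi => ?_⟩
  have hsup : ∀ x, g x ≤ ⨆ x, g x := le_ciSup ⟨M, forall_mem_range.2 hM⟩
  refine ⟨screenedPoissonExtension k g, contDiffOn_screenedPoissonExtension hk.le hgi,
    (continuous_screenedPoissonExtension hk.le hg (M := M) fun x => ?_).continuousOn,
    fun z hz => lap_screenedPoissonExtension hk.le hgi hz, screenedPoissonExtension_ofReal k g,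
    fun z _ => ⟨screenedPoissonExtension_nonneg k hg0 z,
      screenedPoissonExtension_le hk.le hg0 hsup z⟩, fun x y hy => ?_⟩
  · exact (abs_of_nonneg (hg0 x)).trans_le (hM x)
  · simpa using screenedPoissonExtension_le_exp (z := x + y * Complex.I) hk hgi (by simpa using hy)
end

section
/- Let k, k' > 0 and let g : ℝ → ℝ be a continuous, nonnegative, integrable function with g ≤ 1/(4k') everywhere. Then there exists a function v, smooth on the open upper half-plane ℍ and continuous on its closure, such that: v ≥ 0 everywhere; v ≥ g on ℝ; Δv ≤ k·v − k·k'·v² on ℍ; and there is a constant C > 0 such that v(x + iy) ≤ C · ‖g‖_{L¹(ℝ)} · e^{−2√k · y} / √y for all x ∈ ℝ and y ≥ 1. -/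
/-!
A linear barrier comes from damping the Poisson kernel `π⁻¹ h`, `h = Im (-1 / z) = y / r ^ 2`, by a
radial factor `φ r`. As `h` is harmonic and homogeneous of degree `-1`, the full Laplacian of `h φ`
is `h (φ'' - φ' / r)`. For `φ r = exp (-m r) √(1 + 2 m r)` this equals
`m² (1 - (1 + 2 m r)⁻²) h φ ≤ m² h φ`, so integrating `g` against `π⁻¹ h φ` gives `u` with
`Δ u ≤ m² u`; its boundary values are `g` because `φ 0 = 1`, and `h φ ≲ exp (-m y) / √y` for
`y ≥ 1`. With `m = 2 √k` the bound reads `lap u ≤ k u`, and `v = 2 u - 4 k' u²` turns it into the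
nonlinear inequality, at the cost of a factor `2` in the decay.

Differentiating under the integral sign needs every derivative of `h φ` to be bounded on
`{y > δ}`. No formula for them is required: `h φ` is a polynomial in `x / r`, `1 / r`,
`1 / (1 + 2 m r)` and `φ r`, and these solve an autonomous polynomial system and stay bounded.
-/

open MeasureTheory Filter Topology Laplacian InnerProductSpace
open scoped ContDiff RealInnerProductSpace Gradient

universe u

section Laplacian

variable {E : Type*} [NormedAddCommGroup E] [InnerProductSpace ℝ E] [FiniteDimensional ℝ E]
  {f h u : E → ℝ} {φ : ℝ → ℝ} {x : E}

theorem laplacian_eq_sum_fderiv_fderiv (f : E → ℝ) (x : E) :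
    Δ f x = ∑ i, fderiv ℝ (fderiv ℝ f) x
      (stdOrthonormalBasis ℝ E i) (stdOrthonormalBasis ℝ E i) := by
  simp [laplacian_eq_iteratedFDeriv_stdOrthonormalBasis, iteratedFDeriv_two_apply]

theorem sum_fderiv_mul_fderiv (f h : E → ℝ) (x : E) :
    ∑ i, fderiv ℝ f x (stdOrthonormalBasis ℝ E i) * fderiv ℝ h x (stdOrthonormalBasis ℝ E i) =
      ⟪∇ f x, ∇ h x⟫ := by
  simpa using (stdOrthonormalBasis ℝ E).sum_inner_mul_inner (∇ f x) (∇ h x)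

theorem laplacian_mul (hf : ContDiffAt ℝ 2 f x) (hh : ContDiffAt ℝ 2 h x) :
    Δ (f * h) x = f x * Δ h x + h x * Δ f x + 2 * ⟪∇ f x, ∇ h x⟫ := by
  have fderiv_mul_eq : fderiv ℝ (f * h) =ᶠ[𝓝 x] f • fderiv ℝ h + h • fderiv ℝ f := by
    filter_upwards [hf.eventually (by simp), hh.eventually (by simp)] with y hfy hhy
    exact fderiv_mul (hfy.differentiableAt two_ne_zero) (hhy.differentiableAt two_ne_zero)
  have hf₁ := (hf.differentiableAt two_ne_zero).hasFDerivAt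
  have hh₁ := (hh.differentiableAt two_ne_zero).hasFDerivAt
  have hf₂ := ((hf.fderiv_right (m := 1) le_rfl).differentiableAt one_ne_zero).hasFDerivAt
  have hh₂ := ((hh.fderiv_right (m := 1) le_rfl).differentiableAt one_ne_zero).hasFDerivAt
  have second := fderiv_mul_eq.fderiv_eq.trans ((hf₁.smul hh₂).add (hh₁.smul hf₂)).fderiv
  simp only [laplacian_eq_sum_fderiv_fderiv, second, ← sum_fderiv_mul_fderiv, Finset.mul_sum,
    ← Finset.sum_add_distrib]
  refine Finset.sum_congr rfl fun i _ => ?_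
  simp only [add_apply, smul_apply, ContinuousLinearMap.smulRight_apply, smul_eq_mul]
  ring

theorem laplacian_comp (hφ : ContDiffAt ℝ 2 φ (u x)) (hu : ContDiffAt ℝ 2 u x) :
    Δ (φ ∘ u) x = deriv φ (u x) * Δ u x + deriv (deriv φ) (u x) * ‖∇ u x‖ ^ 2 := by
  have fderiv_comp_eq : fderiv ℝ (φ ∘ u) =ᶠ[𝓝 x] (deriv φ ∘ u) • fderiv ℝ u := by
    filter_upwards [hu.eventually (by simp),
      hu.continuousAt.eventually (hφ.eventually (by simp))] with y huy hφy
    exact ((hφy.differentiableAt two_ne_zero).hasDerivAt.comp_hasFDerivAt y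
      (huy.differentiableAt two_ne_zero).hasFDerivAt).fderiv
  have hφ₂ : DifferentiableAt ℝ (deriv φ) (u x) :=
    ((hφ.fderiv_right (m := 1) le_rfl).clm_apply contDiffAt_const).differentiableAt one_ne_zero
  have hu₁ := (hu.differentiableAt two_ne_zero).hasFDerivAt
  have hu₂ := ((hu.fderiv_right (m := 1) le_rfl).differentiableAt one_ne_zero).hasFDerivAt
  have second := fderiv_comp_eq.fderiv_eq.trans
    ((hφ₂.hasDerivAt.comp_hasFDerivAt x hu₁).smul hu₂).fderiv
  simp only [laplacian_eq_sum_fderiv_fderiv, second, ← real_inner_self_eq_norm_sq,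
    ← sum_fderiv_mul_fderiv, Finset.mul_sum, ← Finset.sum_add_distrib]
  refine Finset.sum_congr rfl fun i _ => ?_
  simp only [Function.comp_apply, add_apply, smul_apply, ContinuousLinearMap.smulRight_apply,
    smul_eq_mul]
  ring

theorem gradient_comp (hφ : DifferentiableAt ℝ φ (u x)) (hu : DifferentiableAt ℝ u x) :
    ∇ (φ ∘ u) x = deriv φ (u x) • ∇ u x := by
  refine ext_inner_right ℝ fun v => ?_
  rw [real_inner_smul_left, inner_gradient_left, inner_gradient_left,
    (hφ.hasDerivAt.comp_hasFDerivAt x hu.hasFDerivAt).fderiv, smul_apply, smul_eq_mul]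

theorem laplacian_norm_sq (x : E) :
    Δ (fun y : E => ‖y‖ ^ 2) x = 2 * Module.finrank ℝ E := by
  have first : fderiv ℝ (fun y : E => ‖y‖ ^ 2) = ⇑(2 • innerSL ℝ (E := E)) := by
    ext1 y
    exact (hasStrictFDerivAt_norm_sq y).hasFDerivAt.fderiv
  have second : fderiv ℝ (fderiv ℝ (fun y : E => ‖y‖ ^ 2)) x = 2 • innerSL ℝ := by
    rw [first]
    exact (2 • innerSL ℝ (E := E)).fderiv
  have trace_term (v : E) : (2 • innerSL ℝ (E := E)) v v = 2 * ‖v‖ ^ 2 := by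
    change 2 • ⟪v, v⟫ = _
    rw [real_inner_self_eq_norm_sq, nsmul_eq_mul, Nat.cast_ofNat]
  simp only [laplacian_eq_sum_fderiv_fderiv, second, trace_term]
  simp [mul_comm]

omit [FiniteDimensional ℝ E] in
theorem hasFDerivAt_norm (hx : x ≠ 0) :
    HasFDerivAt (fun y : E => ‖y‖) (innerSL ℝ (‖x‖⁻¹ • x)) x := by
  have h := (hasStrictFDerivAt_norm_sq x).hasFDerivAt.sqrt (by positivity)
  simp only [Real.sqrt_sq (norm_nonneg _)] at h
  refine h.congr_fderiv ?_
  ext v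
  simp only [one_div, mul_inv_rev, smul_apply, coe_innerSL_apply, nsmul_eq_mul, Nat.cast_ofNat,
    smul_eq_mul, map_smul]
  field_simp

theorem gradient_norm (hx : x ≠ 0) : ∇ (fun y : E => ‖y‖) x = ‖x‖⁻¹ • x :=
  HasGradientAt.gradient (hasFDerivAt_norm hx)

theorem laplacian_norm (hx : x ≠ 0) :
    Δ (fun y : E => ‖y‖) x = (Module.finrank ℝ E - 1) / ‖x‖ := by
  have hx' : ‖x‖ ≠ 0 := norm_ne_zero_iff.2 hx
  have h := laplacian_norm_sq x
  have h' := laplacian_mul (contDiffAt_norm ℝ hx) (contDiffAt_norm ℝ hx)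
  rw [show (fun y : E => ‖y‖) * (fun y : E => ‖y‖) = fun y => ‖y‖ ^ 2 by ext; simp [sq], h,
    gradient_norm hx, real_inner_self_eq_norm_sq, norm_smul, norm_inv, norm_norm,
    inv_mul_cancel₀ hx'] at h'
  field_simp
  linarith

end Laplacian

section BoundedDerivs

variable {E F : Type*} [NormedAddCommGroup E] [NormedSpace ℝ E] [NormedAddCommGroup F]
  [NormedSpace ℝ F] {s t : Set E} {f : E → F}

/-- `f` is smooth on `s` and each of its iterated derivatives is bounded there. The derivatives are
the global ones, so the notion is meant for open `s`. -/
structure HasBoundedDerivsOn (f : E → F) (s : Set E) : Prop where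
  contDiffOn : ContDiffOn ℝ ∞ f s
  exists_norm_iteratedFDeriv_le (n : ℕ) : ∃ C, ∀ x ∈ s, ‖iteratedFDeriv ℝ n f x‖ ≤ C

theorem HasBoundedDerivsOn.mono (hf : HasBoundedDerivsOn f t) (hst : s ⊆ t) :
    HasBoundedDerivsOn f s where
  contDiffOn := hf.contDiffOn.mono hst
  exists_norm_iteratedFDeriv_le n :=
    (hf.exists_norm_iteratedFDeriv_le n).imp fun _ hC x hx => hC x (hst hx)

theorem HasBoundedDerivsOn.fderiv (hf : HasBoundedDerivsOn f s) (hs : IsOpen s) :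
    HasBoundedDerivsOn (fderiv ℝ f) s where
  contDiffOn := ((contDiffOn_infty_iff_fderiv_of_isOpen hs).1 hf.contDiffOn).2
  exists_norm_iteratedFDeriv_le n := by
    simpa only [norm_iteratedFDeriv_fderiv] using hf.exists_norm_iteratedFDeriv_le (n + 1)

theorem HasBoundedDerivsOn.exists_norm_le (hf : HasBoundedDerivsOn f s) :
    ∃ C, ∀ x ∈ s, ‖f x‖ ≤ C := by
  simpa only [norm_iteratedFDeriv_zero] using hf.exists_norm_iteratedFDeriv_le 0

theorem HasBoundedDerivsOn.hasFDerivAt (hf : HasBoundedDerivsOn f s) (hs : IsOpen s) {x : E}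
    (hx : x ∈ s) : HasFDerivAt f (_root_.fderiv ℝ f x) x :=
  ((hf.contDiffOn.contDiffAt (hs.mem_nhds hx)).differentiableAt (by simp)).hasFDerivAt

section AutonomousSystem

variable {E F G : Type u} [NormedAddCommGroup E] [NormedSpace ℝ E] [NormedAddCommGroup F]
  [NormedSpace ℝ F] [NormedAddCommGroup G] [NormedSpace ℝ G] {s : Set E} {f : E → F}
  {Φ : F → E →L[ℝ] F} {Ψ : F → G}

theorem contDiffOn_of_autonomous (hs : IsOpen s) (hΦ : ContDiff ℝ ∞ Φ)
    (hf : ∀ x ∈ s, HasFDerivAt f (Φ (f x)) x) : ContDiffOn ℝ ∞ f s := by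
  refine contDiffOn_infty.2 fun n => ?_
  induction n with
  | zero => exact contDiffOn_zero.2 fun x hx => (hf x hx).continuousAt.continuousWithinAt
  | succ n ih =>
    push_cast
    refine (contDiffOn_succ_iff_fderiv_of_isOpen hs).2
      ⟨fun x hx => (hf x hx).differentiableAt.differentiableWithinAt, by simp, ?_⟩
    exact ((contDiff_infty.1 hΦ n).comp_contDiffOn ih).congr fun x hx => (hf x hx).fderiv

-- Differentiating `Ψ ∘ f` gives `Ψ₁ ∘ f` with `Ψ₁ y = DΨ y ∘ Φ y`, again smooth in `f`.
theorem exists_norm_iteratedFDeriv_comp_le_of_autonomous [ProperSpace F] (hs : IsOpen s)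
    (hΦ : ContDiff ℝ ∞ Φ) (hf : ∀ x ∈ s, HasFDerivAt f (Φ (f x)) x)
    (hbdd : Bornology.IsBounded (f '' s)) (hΨ : ContDiff ℝ ∞ Ψ) (n : ℕ) :
    ∃ C, ∀ x ∈ s, ‖iteratedFDeriv ℝ n (Ψ ∘ f) x‖ ≤ C := by
  induction n generalizing G with
  | zero =>
    obtain ⟨C, hC⟩ :=
      hbdd.isCompact_closure.exists_bound_of_continuousOn hΨ.continuous.continuousOn
    exact ⟨C, fun x hx => by
      simpa only [norm_iteratedFDeriv_zero, Function.comp_apply]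
        using hC _ (subset_closure ⟨x, hx, rfl⟩)⟩
  | succ n ih =>
    obtain ⟨C, hC⟩ := ih (Ψ := fun y => (fderiv ℝ Ψ y).comp (Φ y))
      ((hΨ.fderiv_right le_rfl).clm_comp hΦ)
    refine ⟨C, fun x hx => ?_⟩
    have fderiv_comp_eq :
        fderiv ℝ (Ψ ∘ f) =ᶠ[𝓝 x] (fun y => (fderiv ℝ Ψ y).comp (Φ y)) ∘ f :=
      eventually_of_mem (hs.mem_nhds hx) fun y hy =>
        ((hΨ.differentiable (by simp) _).hasFDerivAt.comp y (hf y hy)).fderiv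
    rw [← norm_iteratedFDeriv_fderiv, (fderiv_comp_eq.iteratedFDeriv ℝ n).eq_of_nhds]
    exact hC x hx

theorem hasBoundedDerivsOn_comp_of_autonomous [ProperSpace F] (hs : IsOpen s)
    (hΦ : ContDiff ℝ ∞ Φ) (hf : ∀ x ∈ s, HasFDerivAt f (Φ (f x)) x)
    (hbdd : Bornology.IsBounded (f '' s)) (hΨ : ContDiff ℝ ∞ Ψ) :
    HasBoundedDerivsOn (Ψ ∘ f) s where
  contDiffOn := hΨ.comp_contDiffOn (contDiffOn_of_autonomous hs hΦ hf)
  exists_norm_iteratedFDeriv_le :=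
    exists_norm_iteratedFDeriv_comp_le_of_autonomous hs hΦ hf hbdd hΨ

end AutonomousSystem

end BoundedDerivs

section TranslateIntegral

variable {α : Type*} [MeasurableSpace α] {μ : Measure α} {E F : Type*} [NormedAddCommGroup E]
  [NormedSpace ℝ E] [NormedAddCommGroup F] [NormedSpace ℝ F] {s : Set E} {f : E → F} {g : α → ℝ}
  {τ : α → E} {x : E}

/-- The superposition of the translates of `f` along `τ`, weighted by `g`; for `τ` the inclusion of
a subgroup this is convolution with the measure `g dμ` carried by it. -/
noncomputable def translateIntegral (μ : Measure α) (g : α → ℝ) (τ : α → E) (f : E → F) (x : E) :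
    F :=
  ∫ t, g t • f (x - τ t) ∂μ

variable [TopologicalSpace α] [SecondCountableTopology α] [OpensMeasurableSpace α]

theorem integrable_smul_translate (hg : Integrable g μ) (hτ : Continuous τ)
    (hτs : ∀ x ∈ s, ∀ t, x - τ t ∈ s) (hf : HasBoundedDerivsOn f s) (hx : x ∈ s) :
    Integrable (fun t => g t • f (x - τ t)) μ := by
  obtain ⟨C, hC⟩ := hf.exists_norm_le
  have hcont : Continuous fun t => f (x - τ t) :=
    hf.contDiffOn.continuousOn.comp_continuous (by fun_prop) (hτs x hx)
  exact hg.smul_bdd C hcont.aestronglyMeasurable (.of_forall fun t => hC _ (hτs x hx t))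

theorem hasFDerivAt_translateIntegral (hg : Integrable g μ) (hτ : Continuous τ) (hs : IsOpen s)
    (hτs : ∀ x ∈ s, ∀ t, x - τ t ∈ s) (hf : HasBoundedDerivsOn f s) (hx : x ∈ s) :
    HasFDerivAt (translateIntegral μ g τ f) (translateIntegral μ g τ (fderiv ℝ f) x) x := by
  obtain ⟨C, hC⟩ := (hf.fderiv hs).exists_norm_le
  refine hasFDerivAt_integral_of_dominated_of_fderiv_le
    (F' := fun y t => g t • fderiv ℝ f (y - τ t)) (bound := fun t => ‖g t‖ * C) (hs.mem_nhds hx)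
    (eventually_of_mem (hs.mem_nhds hx) fun y hy =>
      (integrable_smul_translate hg hτ hτs hf hy).aestronglyMeasurable)
    (integrable_smul_translate hg hτ hτs hf hx)
    (integrable_smul_translate hg hτ hτs (hf.fderiv hs) hx).aestronglyMeasurable
    (.of_forall fun t y hy => ?_) (hg.norm.mul_const C) (.of_forall fun t y hy => ?_)
  · rw [norm_smul]
    gcongr
    exact hC _ (hτs y hy t)
  · exact ((hasFDerivAt_comp_sub _).2 (hf.hasFDerivAt hs (hτs y hy t))).const_smul (g t)

theorem contDiffOn_translateIntegral {E F : Type u} [NormedAddCommGroup E] [NormedSpace ℝ E]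
    [NormedAddCommGroup F] [NormedSpace ℝ F] {s : Set E} {f : E → F} {τ : α → E}
    (hg : Integrable g μ) (hτ : Continuous τ) (hs : IsOpen s)
    (hτs : ∀ x ∈ s, ∀ t, x - τ t ∈ s) (hf : HasBoundedDerivsOn f s) :
    ContDiffOn ℝ ∞ (translateIntegral μ g τ f) s := by
  refine contDiffOn_infty.2 fun n => ?_
  induction n generalizing F with
  | zero =>
    exact contDiffOn_zero.2 fun x hx =>
      (hasFDerivAt_translateIntegral hg hτ hs hτs hf hx).continuousAt.continuousWithinAt
  | succ n ih =>
    have hderiv := fun x hx => hasFDerivAt_translateIntegral hg hτ hs hτs hf (x := x) hx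
    push_cast
    refine (contDiffOn_succ_iff_fderiv_of_isOpen hs).2
      ⟨fun x hx => (hderiv x hx).differentiableAt.differentiableWithinAt, by simp, ?_⟩
    exact (ih (hf.fderiv hs)).congr fun x hx => (hderiv x hx).fderiv

theorem fderiv_fderiv_translateIntegral (hg : Integrable g μ) (hτ : Continuous τ) (hs : IsOpen s)
    (hτs : ∀ x ∈ s, ∀ t, x - τ t ∈ s) (hf : HasBoundedDerivsOn f s) (hx : x ∈ s) :
    fderiv ℝ (fderiv ℝ (translateIntegral μ g τ f)) x =
      translateIntegral μ g τ (fderiv ℝ (fderiv ℝ f)) x := by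
  have fderiv_eq : fderiv ℝ (translateIntegral μ g τ f) =ᶠ[𝓝 x]
      translateIntegral μ g τ (fderiv ℝ f) :=
    eventually_of_mem (hs.mem_nhds hx) fun y hy =>
      (hasFDerivAt_translateIntegral hg hτ hs hτs hf hy).fderiv
  rw [fderiv_eq.fderiv_eq]
  exact (hasFDerivAt_translateIntegral hg hτ hs hτs (hf.fderiv hs) hx).fderiv

theorem integrable_smul_laplacian_translate {E : Type*} [NormedAddCommGroup E]
    [InnerProductSpace ℝ E] [FiniteDimensional ℝ E] {s : Set E} {f : E → ℝ} {τ : α → E} {x : E}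
    (hg : Integrable g μ) (hτ : Continuous τ) (hs : IsOpen s)
    (hτs : ∀ x ∈ s, ∀ t, x - τ t ∈ s) (hf : HasBoundedDerivsOn f s) (hx : x ∈ s) :
    Integrable (fun t => g t • (Δ f : E → ℝ) (x - τ t)) μ := by
  simp only [laplacian_eq_sum_fderiv_fderiv, Finset.smul_sum]
  exact integrable_finsetSum _ fun i _ =>
    ((integrable_smul_translate hg hτ hτs ((hf.fderiv hs).fderiv hs) hx).apply_continuousLinearMap
      _).apply_continuousLinearMap _

theorem laplacian_translateIntegral {E : Type*} [NormedAddCommGroup E] [InnerProductSpace ℝ E]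
    [FiniteDimensional ℝ E] {s : Set E} {f : E → ℝ} {τ : α → E} {x : E}
    (hg : Integrable g μ) (hτ : Continuous τ) (hs : IsOpen s)
    (hτs : ∀ x ∈ s, ∀ t, x - τ t ∈ s) (hf : HasBoundedDerivsOn f s) (hx : x ∈ s) :
    Δ (translateIntegral μ g τ f : E → ℝ) x = translateIntegral μ g τ (Δ f : E → ℝ) x := by
  have hint := integrable_smul_translate hg hτ hτs ((hf.fderiv hs).fderiv hs) hx
  have hint' (v : E) : Integrable (fun t => (g t • fderiv ℝ (fderiv ℝ f) (x - τ t)) v) μ :=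
    hint.apply_continuousLinearMap v
  simp only [laplacian_eq_sum_fderiv_fderiv, fderiv_fderiv_translateIntegral hg hτ hs hτs hf hx,
    translateIntegral, Finset.smul_sum]
  refine .trans (Finset.sum_congr rfl fun i _ => ?_)
    (integral_finsetSum _ fun i _ => (hint' _).apply_continuousLinearMap _).symm
  rw [ContinuousLinearMap.integral_apply hint, ContinuousLinearMap.integral_apply (hint' _)]

theorem laplacian_translateIntegral_le {E : Type*} [NormedAddCommGroup E] [InnerProductSpace ℝ E]
    [FiniteDimensional ℝ E] {s : Set E} {f : E → ℝ} {τ : α → E} {x : E} {c : ℝ}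
    (hg : Integrable g μ) (hg0 : ∀ t, 0 ≤ g t) (hτ : Continuous τ) (hs : IsOpen s)
    (hτs : ∀ x ∈ s, ∀ t, x - τ t ∈ s) (hf : HasBoundedDerivsOn f s)
    (hΔ : ∀ x ∈ s, Δ f x ≤ c * f x) (hx : x ∈ s) :
    Δ (translateIntegral μ g τ f : E → ℝ) x ≤ c * translateIntegral μ g τ f x := by
  rw [laplacian_translateIntegral hg hτ hs hτs hf hx, translateIntegral, translateIntegral,
    ← integral_const_mul]
  refine integral_mono (integrable_smul_laplacian_translate hg hτ hs hτs hf hx)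
    ((integrable_smul_translate hg hτ hτs hf hx).const_mul c) fun t => ?_
  calc g t * (Δ f : E → ℝ) (x - τ t) ≤ g t * (c * f (x - τ t)) :=
        mul_le_mul_of_nonneg_left (hΔ _ (hτs x hx t)) (hg0 t)
    _ = c * (g t * f (x - τ t)) := mul_left_comm _ _ _

end TranslateIntegral

section PolarSystem

variable {E F G : Type u} [NormedAddCommGroup E] [InnerProductSpace ℝ E]
  [NormedAddCommGroup F] [NormedSpace ℝ F] [NormedAddCommGroup G] [NormedSpace ℝ G]
  {ρ : ℝ → F} {P : F → F} {Ψ : E × ℝ × F → G} {x : E} {δ : ℝ}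

/-- Direction and inverse radius of `x`, together with a radial quantity `ρ`. If `ρ' = P ∘ ρ`, this
is the state of an autonomous system with field `polarField P` which is bounded away from the
origin as soon as `ρ` is. -/
noncomputable def polarCoords (ρ : ℝ → F) (x : E) : E × ℝ × F :=
  (‖x‖⁻¹ • x, ‖x‖⁻¹, ρ ‖x‖)

/-- The derivative of `polarCoords ρ`, expressed through the value `p` of `polarCoords ρ`, when
`ρ' = P ∘ ρ`. -/
noncomputable def polarField (P : F → F) (p : E × ℝ × F) : E →L[ℝ] E × ℝ × F :=
  (p.2.1 • (.id ℝ E - (innerSL ℝ p.1).smulRight p.1)).prod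
    ((-p.2.1 ^ 2 • innerSL ℝ p.1).prod ((innerSL ℝ p.1).smulRight (P p.2.2)))

theorem hasFDerivAt_polarCoords (hx : x ≠ 0) (hρ : HasDerivAt ρ (P (ρ ‖x‖)) ‖x‖) :
    HasFDerivAt (polarCoords ρ) (polarField P (polarCoords ρ x)) x := by
  have hnorm : HasFDerivAt (‖·‖) _ x := hasFDerivAt_norm hx
  have hinv := (hasDerivAt_inv (norm_ne_zero_iff.2 hx)).comp_hasFDerivAt x hnorm
  have hcoords := (hinv.smul (hasFDerivAt_id x)).prodMk (hinv.prodMk (hρ.hasFDerivAt.comp x hnorm))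
  refine hcoords.congr_fderiv ?_
  ext v
  · simp only [polarField, polarCoords, Function.comp_apply, map_smul, neg_smul, id_eq, inv_pow,
      ContinuousLinearMap.comp_apply, ContinuousLinearMap.comp_smulₛₗ, map_inv₀,
      Real.ringHom_apply, ContinuousLinearMap.prod_apply, ContinuousLinearMap.id_apply,
      ContinuousLinearMap.smulRight_apply, ContinuousLinearMap.toSpanSingleton_apply,
      coe_innerSL_apply, add_apply, sub_apply, smul_apply, neg_apply, smul_eq_mul]
    module
  · simp [polarField, polarCoords]
  · simp [polarField, polarCoords, smul_smul]

theorem contDiff_polarField [FiniteDimensional ℝ E] (hP : ContDiff ℝ ∞ P) :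
    ContDiff ℝ ∞ (polarField P : E × ℝ × F → E →L[ℝ] E × ℝ × F) := by
  refine contDiff_clm_apply_iff.2 fun v => ?_
  have inner_smooth : ContDiff ℝ ∞ fun p : E × ℝ × F => ⟪p.1, v⟫ :=
    contDiff_fst.inner ℝ contDiff_const
  simp only [polarField, ContinuousLinearMap.prod_apply, smul_apply, sub_apply,
    ContinuousLinearMap.id_apply, ContinuousLinearMap.smulRight_apply, innerSL_apply_apply]
  fun_prop

omit [NormedSpace ℝ F] in
theorem isBounded_polarCoords (hδ : 0 < δ) (hρ : Bornology.IsBounded (ρ '' Set.Ioi δ)) :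
    Bornology.IsBounded (polarCoords ρ '' {x : E | δ < ‖x‖}) := by
  refine ((Metric.isBounded_closedBall (x := (0 : E)) (r := 1)).prod
    ((Metric.isBounded_closedBall (x := (0 : ℝ)) (r := δ⁻¹)).prod hρ)).subset ?_
  rintro _ ⟨x, hx, rfl⟩
  have hx' : 0 < ‖x‖ := hδ.trans hx
  refine ⟨?_, ?_, ⟨_, hx, rfl⟩⟩
  · simp [polarCoords, norm_smul, inv_mul_cancel₀ hx'.ne']
  · simpa [polarCoords] using inv_anti₀ hδ hx.le

theorem hasBoundedDerivsOn_comp_polarCoords [FiniteDimensional ℝ E] [FiniteDimensional ℝ F]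
    (hδ : 0 < δ) (hP : ContDiff ℝ ∞ P) (hρ : ∀ r, δ < r → HasDerivAt ρ (P (ρ r)) r)
    (hρb : Bornology.IsBounded (ρ '' Set.Ioi δ)) (hΨ : ContDiff ℝ ∞ Ψ) :
    HasBoundedDerivsOn (Ψ ∘ polarCoords ρ) {x : E | δ < ‖x‖} := by
  have : ProperSpace F := FiniteDimensional.proper_real F
  refine hasBoundedDerivsOn_comp_of_autonomous (isOpen_lt continuous_const continuous_norm)
    (contDiff_polarField hP) (fun x hx => ?_) (isBounded_polarCoords hδ hρb) hΨ
  exact hasFDerivAt_polarCoords (norm_pos_iff.1 (hδ.trans hx)) (hρ _ hx)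

end PolarSystem

section DampedKernel

variable {φ : ℝ → ℝ} {z : ℂ}

/-- The half-plane Poisson kernel (up to the factor `1 / π`) times the radial factor `φ`. -/
noncomputable def dampedKernel (φ : ℝ → ℝ) (z : ℂ) : ℝ :=
  z.im / ‖z‖ ^ 2 * φ ‖z‖

theorem neg_inv_im (z : ℂ) : (-z⁻¹).im = z.im / ‖z‖ ^ 2 := by
  simp [Complex.inv_im, Complex.normSq_eq_norm_sq, neg_div]

theorem fderiv_neg_inv_im_self (hz : z ≠ 0) :
    fderiv ℝ (fun w : ℂ => (-w⁻¹).im) z z = -(-z⁻¹).im := by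
  have hinv := ((hasDerivAt_inv hz).neg.hasFDerivAt.restrictScalars ℝ)
  have him : HasFDerivAt (fun w : ℂ => (-w⁻¹).im) _ z :=
    Complex.imCLM.hasFDerivAt.comp z hinv
  rw [him.fderiv]
  have cancel : z • - -(z ^ 2)⁻¹ = z⁻¹ := by
    rw [smul_eq_mul]
    field_simp
  change (z • - -(z ^ 2)⁻¹).im = _
  rw [cancel, Complex.neg_im, neg_neg]

theorem laplacian_dampedKernel (hφ : ContDiffAt ℝ 2 φ ‖z‖) (hz : z ≠ 0) :
    Δ (dampedKernel φ) z =
      z.im / ‖z‖ ^ 2 * (deriv (deriv φ) ‖z‖ - deriv φ ‖z‖ / ‖z‖) := by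
  have harmonic : HarmonicAt (fun w : ℂ => (-w⁻¹).im) z :=
    AnalyticAt.harmonicAt_im (analyticAt_inv hz).neg
  have hnorm : ContDiffAt ℝ 2 (fun w : ℂ => ‖w‖) z := contDiffAt_norm ℝ hz
  have factor : dampedKernel φ = (fun w : ℂ => (-w⁻¹).im) * (φ ∘ fun w => ‖w‖) := by
    ext w
    simp only [dampedKernel, Pi.mul_apply, neg_inv_im, Function.comp_apply]
  rw [factor, laplacian_mul harmonic.1 (hφ.comp z hnorm), harmonic.2.eq_of_nhds,
    laplacian_comp hφ hnorm, laplacian_norm hz,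
    gradient_comp (hφ.differentiableAt two_ne_zero) (hnorm.differentiableAt two_ne_zero),
    gradient_norm hz, inner_smul_right, inner_smul_right, inner_gradient_left,
    fderiv_neg_inv_im_self hz, neg_inv_im]
  simp only [Complex.finrank_real_complex, Nat.cast_ofNat, Function.comp_apply, Pi.zero_apply,
    mul_zero, add_zero, mul_neg, norm_smul, norm_inv, norm_norm]
  field_simp
  ring

end DampedKernel

section DampedProfile

variable {m r : ℝ}

/-- The damping factor: it equals `1` at the origin, decays like `√r * exp (-m * r)`, and
satisfies `φ'' - φ' / r ≤ m ^ 2 * φ`. -/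
noncomputable def dampedProfile (m r : ℝ) : ℝ :=
  Real.exp (-(m * r)) * √(1 + 2 * m * r)

theorem dampedProfile_zero (m : ℝ) : dampedProfile m 0 = 1 := by
  simp [dampedProfile]

theorem dampedProfile_nonneg (m r : ℝ) : 0 ≤ dampedProfile m r :=
  mul_nonneg (Real.exp_pos _).le (Real.sqrt_nonneg _)

theorem dampedProfile_le_one (m r : ℝ) : dampedProfile m r ≤ 1 := by
  have sqrt_le_exp : √(1 + 2 * m * r) ≤ Real.exp (m * r) := by
    rw [Real.sqrt_le_left (Real.exp_pos _).le, ← Real.exp_nat_mul]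
    convert Real.add_one_le_exp (2 * m * r) using 1
    · ring
    · push_cast
      ring_nf
  calc dampedProfile m r ≤ Real.exp (-(m * r)) * Real.exp (m * r) :=
        mul_le_mul_of_nonneg_left sqrt_le_exp (Real.exp_pos _).le
    _ = 1 := by rw [← Real.exp_add, neg_add_cancel, Real.exp_zero]

theorem continuous_dampedProfile (m : ℝ) : Continuous (dampedProfile m) := by
  unfold dampedProfile
  fun_prop

theorem contDiffAt_dampedProfile {n : WithTop ℕ∞} (hr : 0 < 1 + 2 * m * r) :
    ContDiffAt ℝ n (dampedProfile m) r :=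
  ContDiffAt.mul (by fun_prop) (ContDiffAt.sqrt (by fun_prop) hr.ne')

theorem hasDerivAt_dampedProfile (hr : 0 < 1 + 2 * m * r) :
    HasDerivAt (dampedProfile m) (m * ((1 + 2 * m * r)⁻¹ - 1) * dampedProfile m r) r := by
  have hlin : HasDerivAt (fun t => 1 + 2 * m * t) (2 * m) r := by
    simpa using ((hasDerivAt_id r).const_mul (2 * m)).const_add 1
  have hexp : HasDerivAt (fun t => Real.exp (-(m * t))) (Real.exp (-(m * r)) * -(m * 1)) r :=
    ((hasDerivAt_id r).const_mul m).neg.exp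
  refine (hexp.mul (hlin.sqrt hr.ne')).congr_deriv ?_
  have inv_mul_sqrt : (1 + 2 * m * r)⁻¹ * √(1 + 2 * m * r) = 1 / √(1 + 2 * m * r) := by
    rw [mul_comm, ← div_eq_mul_inv, Real.sqrt_div_self']
  rw [dampedProfile]
  linear_combination (-m * Real.exp (-(m * r))) * inv_mul_sqrt

theorem hasDerivAt_inv_one_add_two_mul (hr : 1 + 2 * m * r ≠ 0) :
    HasDerivAt (fun t => (1 + 2 * m * t)⁻¹) (-2 * m * (1 + 2 * m * r)⁻¹ ^ 2) r := by
  have hlin : HasDerivAt (fun t => 1 + 2 * m * t) (2 * m) r := by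
    simpa using ((hasDerivAt_id r).const_mul (2 * m)).const_add 1
  refine (hlin.inv hr).congr_deriv ?_
  field_simp

theorem deriv_deriv_sub_deriv_div_dampedProfile (hr : r ≠ 0) (hr' : 0 < 1 + 2 * m * r) :
    deriv (deriv (dampedProfile m)) r - deriv (dampedProfile m) r / r =
      m ^ 2 * (1 - (1 + 2 * m * r)⁻¹ ^ 2) * dampedProfile m r := by
  have first : deriv (dampedProfile m) =ᶠ[𝓝 r]
      fun t => m * ((1 + 2 * m * t)⁻¹ - 1) * dampedProfile m t := by
    have : Continuous fun t => 1 + 2 * m * t := by fun_prop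
    filter_upwards [this.continuousAt.eventually (lt_mem_nhds hr')] with t ht
    exact (hasDerivAt_dampedProfile ht).deriv
  have second : deriv (fun t => m * ((1 + 2 * m * t)⁻¹ - 1) * dampedProfile m t) r = _ :=
    ((((hasDerivAt_inv_one_add_two_mul hr'.ne').sub_const 1).const_mul m).mul
      (hasDerivAt_dampedProfile hr')).deriv
  have sub_one_div : ((1 + 2 * m * r)⁻¹ - 1) / r = -2 * m * (1 + 2 * m * r)⁻¹ := by
    field_simp
    ring
  rw [first.deriv_eq, second, first.eq_of_nhds]
  linear_combination (-m * dampedProfile m r) * sub_one_div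

end DampedProfile

section DampedProfileKernel

variable {m δ : ℝ} {z : ℂ}

theorem hasBoundedDerivsOn_dampedKernel (hm : 0 ≤ m) (hδ : 0 < δ) :
    HasBoundedDerivsOn (dampedKernel (dampedProfile m)) {z : ℂ | δ < z.im} := by
  let ρ : ℝ → ℝ × ℝ := fun r => ((1 + 2 * m * r)⁻¹, dampedProfile m r)
  let P : ℝ × ℝ → ℝ × ℝ := fun p => (-2 * m * p.1 ^ 2, m * (p.1 - 1) * p.2)
  let Ψ : ℂ × ℝ × ℝ × ℝ → ℝ := fun p => Complex.imCLM p.1 * p.2.1 * p.2.2.2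
  have hpos {r : ℝ} (hr : δ < r) : 1 ≤ 1 + 2 * m * r :=
    le_add_of_nonneg_right (mul_nonneg (by positivity) (hδ.trans hr).le)
  have hρ (r : ℝ) (hr : δ < r) : HasDerivAt ρ (P (ρ r)) r :=
    (hasDerivAt_inv_one_add_two_mul (by linarith [hpos hr])).prodMk
      (hasDerivAt_dampedProfile (by linarith [hpos hr]))
  have hρb : Bornology.IsBounded (ρ '' Set.Ioi δ) := by
    refine ((Metric.isBounded_Icc (0 : ℝ) 1).prod (Metric.isBounded_Icc (0 : ℝ) 1)).subset ?_
    rintro _ ⟨r, hr, rfl⟩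
    exact ⟨⟨inv_nonneg.2 (zero_le_one.trans (hpos hr)), inv_le_one_of_one_le₀ (hpos hr)⟩,
      dampedProfile_nonneg m r, dampedProfile_le_one m r⟩
  have factor : dampedKernel (dampedProfile m) = Ψ ∘ polarCoords ρ := by
    ext z
    simp only [dampedKernel, Function.comp_apply, polarCoords, Ψ, ρ, Complex.imCLM_apply,
      Complex.smul_im, smul_eq_mul]
    ring
  rw [factor]
  exact (hasBoundedDerivsOn_comp_polarCoords hδ (by fun_prop) hρ hρb (by fun_prop)).mono
    fun z hz => lt_of_lt_of_le hz ((le_abs_self _).trans (Complex.abs_im_le_norm z))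

theorem laplacian_dampedKernel_dampedProfile_le (hm : 0 ≤ m) (hz : 0 < z.im) :
    Δ (dampedKernel (dampedProfile m)) z ≤ m ^ 2 * dampedKernel (dampedProfile m) z := by
  have hz0 : z ≠ 0 := fun h => hz.ne' (by rw [h, Complex.zero_im])
  have hr : 0 < ‖z‖ := norm_pos_iff.2 hz0
  have hpos : 0 < 1 + 2 * m * ‖z‖ := by positivity
  rw [laplacian_dampedKernel (contDiffAt_dampedProfile hpos) hz0,
    deriv_deriv_sub_deriv_div_dampedProfile hr.ne' hpos, dampedKernel]
  have hφ := dampedProfile_nonneg m ‖z‖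
  calc z.im / ‖z‖ ^ 2 * (m ^ 2 * (1 - (1 + 2 * m * ‖z‖)⁻¹ ^ 2) * dampedProfile m ‖z‖)
      ≤ z.im / ‖z‖ ^ 2 * (m ^ 2 * 1 * dampedProfile m ‖z‖) := by
        gcongr
        exact sub_le_self _ (by positivity)
    _ = m ^ 2 * (z.im / ‖z‖ ^ 2 * dampedProfile m ‖z‖) := by ring

theorem dampedProfile_le (hm : 0 ≤ m) {y r : ℝ} (hyr : y ≤ r) (hr : 1 ≤ r) :
    dampedProfile m r ≤ Real.exp (-m * y) * (√(1 + 2 * m) * √r) := by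
  rw [dampedProfile, ← Real.sqrt_mul (by positivity)]
  gcongr
  · nlinarith
  · nlinarith

theorem dampedKernel_dampedProfile_le (hm : 0 ≤ m) (hz : 1 ≤ z.im) :
    dampedKernel (dampedProfile m) z ≤ √(1 + 2 * m) * (Real.exp (-m * z.im) / √z.im) := by
  have him : z.im ≤ ‖z‖ := (le_abs_self _).trans (Complex.abs_im_le_norm z)
  have hr : 0 < ‖z‖ := by linarith
  calc dampedKernel (dampedProfile m) z
      ≤ ‖z‖ / ‖z‖ ^ 2 * (Real.exp (-m * z.im) * (√(1 + 2 * m) * √‖z‖)) := by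
        unfold dampedKernel
        have := dampedProfile_nonneg m ‖z‖
        gcongr
        exact dampedProfile_le hm him (hz.trans him)
    _ = √(1 + 2 * m) * (Real.exp (-m * z.im) / √‖z‖) := by
        rw [div_eq_mul_one_div _ √_, ← Real.sqrt_div_self']
        field_simp
    _ ≤ √(1 + 2 * m) * (Real.exp (-m * z.im) / √z.im) := by
        gcongr

end DampedProfileKernel

section DampedExtension

variable {φ g : ℝ → ℝ} {m M : ℝ} {z : ℂ}

/-- The integral of `g` against `π⁻¹ * dampedKernel φ`, written in the variable `s = (t - x) / y`
so that it is defined, and continuous, up to the real line. For `φ = 1` this is the Poisson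
extension of `g`. -/
noncomputable def dampedExtension (φ g : ℝ → ℝ) (z : ℂ) : ℝ :=
  Real.pi⁻¹ * ∫ s : ℝ, (1 + s ^ 2)⁻¹ * φ (z.im * √(1 + s ^ 2)) * g (z.re + z.im * s)

theorem dampedKernel_sub_ofReal (φ : ℝ → ℝ) (hz : 0 < z.im) (s : ℝ) :
    z.im * dampedKernel φ (z - (z.re + z.im * s : ℝ)) =
      (1 + s ^ 2)⁻¹ * φ (z.im * √(1 + s ^ 2)) := by
  have norm_sub : ‖z - (z.re + z.im * s : ℝ)‖ = z.im * √(1 + s ^ 2) := by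
    rw [Complex.norm_eq_sqrt_sq_add_sq, ← Real.sqrt_sq hz.le, ← Real.sqrt_mul (sq_nonneg _),
      Real.sqrt_sq hz.le]
    congr 1
    simp only [Complex.sub_re, Complex.sub_im, Complex.ofReal_re, Complex.ofReal_im]
    ring
  rw [dampedKernel, norm_sub, mul_pow, Real.sq_sqrt (by positivity), Complex.sub_im,
    Complex.ofReal_im, sub_zero]
  field_simp

theorem dampedExtension_eq_translateIntegral (φ g : ℝ → ℝ) (hz : 0 < z.im) :
    dampedExtension φ g z =
      Real.pi⁻¹ * translateIntegral volume g Complex.ofReal (dampedKernel φ) z := by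
  have shift : ∫ t : ℝ, g (z.re + t) • dampedKernel φ (z - (z.re + t : ℝ)) =
      translateIntegral volume g Complex.ofReal (dampedKernel φ) z :=
    integral_add_left_eq_self (fun t : ℝ => g t • dampedKernel φ (z - t)) z.re
  have scale := Measure.integral_comp_mul_left
    (fun t : ℝ => g (z.re + t) • dampedKernel φ (z - (z.re + t : ℝ))) z.im
  rw [abs_of_pos (inv_pos.2 hz), smul_eq_mul, shift, eq_inv_mul_iff_mul_eq₀ hz.ne'] at scale
  rw [dampedExtension, ← scale, ← integral_const_mul z.im]
  congr 1
  refine integral_congr_ae (.of_forall fun s => ?_)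
  beta_reduce
  rw [← dampedKernel_sub_ofReal φ hz, smul_eq_mul]
  ring

theorem norm_dampedExtension_integrand_le (hφ : ∀ r, |φ r| ≤ 1) (hg : ∀ x, |g x| ≤ M) (z : ℂ)
    (s : ℝ) :
    ‖(1 + s ^ 2)⁻¹ * φ (z.im * √(1 + s ^ 2)) * g (z.re + z.im * s)‖ ≤ (1 + s ^ 2)⁻¹ * M := by
  rw [Real.norm_eq_abs, abs_mul, abs_mul, abs_of_pos (by positivity : 0 < (1 + s ^ 2)⁻¹)]
  gcongr
  · exact mul_le_of_le_one_right (by positivity) (hφ _)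
  · exact hg _

theorem continuous_dampedExtension (hφc : Continuous φ) (hφ : ∀ r, |φ r| ≤ 1)
    (hgc : Continuous g) (hg : ∀ x, |g x| ≤ M) : Continuous (dampedExtension φ g) := by
  have cauchy_continuous : Continuous fun s : ℝ => (1 + s ^ 2)⁻¹ :=
    Continuous.inv₀ (by fun_prop) fun s => by positivity
  have := Complex.continuous_im
  have := Complex.continuous_re
  exact continuous_const.mul (continuous_of_dominated
    (fun z => Continuous.aestronglyMeasurable (by fun_prop))
    (fun z => .of_forall (norm_dampedExtension_integrand_le hφ hg z))
    (integrable_inv_one_add_sq.mul_const M) (.of_forall fun s => by fun_prop))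

theorem abs_dampedExtension_le (hφ : ∀ r, |φ r| ≤ 1) (hg : ∀ x, |g x| ≤ M) (z : ℂ) :
    |dampedExtension φ g z| ≤ M := by
  have h := norm_integral_le_of_norm_le (integrable_inv_one_add_sq.mul_const M)
    (.of_forall (norm_dampedExtension_integrand_le hφ hg z))
  rw [integral_mul_const, integral_univ_inv_one_add_sq, Real.norm_eq_abs] at h
  rwa [dampedExtension, abs_mul, abs_of_pos (inv_pos.2 Real.pi_pos), inv_mul_le_iff₀ Real.pi_pos]

theorem dampedExtension_nonneg (hφ : ∀ r, 0 ≤ φ r) (hg : ∀ x, 0 ≤ g x) (z : ℂ) :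
    0 ≤ dampedExtension φ g z :=
  mul_nonneg (by positivity) (integral_nonneg fun _ =>
    mul_nonneg (mul_nonneg (by positivity) (hφ _)) (hg _))

theorem dampedExtension_ofReal (hφ : φ 0 = 1) (g : ℝ → ℝ) (x : ℝ) :
    dampedExtension φ g x = g x := by
  simp [dampedExtension, hφ, integral_mul_const, Real.pi_ne_zero]

theorem isOpen_lt_im (δ : ℝ) : IsOpen {z : ℂ | δ < z.im} :=
  isOpen_lt continuous_const Complex.continuous_im

theorem sub_ofReal_mem_lt_im {δ : ℝ} (z : ℂ) (hz : z ∈ {z : ℂ | δ < z.im}) (t : ℝ) :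
    z - t ∈ {z : ℂ | δ < z.im} := by
  simpa using hz

theorem contDiffOn_dampedExtension (hm : 0 ≤ m) (hg : Integrable g) :
    ContDiffOn ℝ ∞ (dampedExtension (dampedProfile m) g) {z : ℂ | 0 < z.im} := by
  intro z hz
  have hδ : 0 < z.im / 2 := half_pos hz
  have smooth := contDiffOn_const (c := Real.pi⁻¹) |>.mul <|
    contDiffOn_translateIntegral hg Complex.continuous_ofReal (isOpen_lt_im _)
      sub_ofReal_mem_lt_im (hasBoundedDerivsOn_dampedKernel hm hδ)
  have smooth_near := smooth.congr fun w hw =>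
    dampedExtension_eq_translateIntegral _ g (hδ.trans hw)
  exact (smooth_near.contDiffAt
    ((isOpen_lt_im _).mem_nhds (half_lt_self (a := z.im) hz))).contDiffWithinAt

theorem laplacian_dampedExtension_le (hm : 0 ≤ m) (hg : Integrable g) (hg0 : ∀ x, 0 ≤ g x)
    (hz : 0 < z.im) :
    Δ (dampedExtension (dampedProfile m) g) z ≤ m ^ 2 * dampedExtension (dampedProfile m) g z := by
  set K := dampedKernel (dampedProfile m)
  have hmem : z ∈ {w : ℂ | z.im / 2 < w.im} := half_lt_self (a := z.im) hz
  have hK : HasBoundedDerivsOn K {w : ℂ | z.im / 2 < w.im} :=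
    hasBoundedDerivsOn_dampedKernel hm (half_pos hz)
  have smooth := (contDiffOn_translateIntegral hg Complex.continuous_ofReal (isOpen_lt_im _)
    sub_ofReal_mem_lt_im hK).contDiffAt ((isOpen_lt_im _).mem_nhds hmem)
  have eventually_eq : dampedExtension (dampedProfile m) g =ᶠ[𝓝 z]
      Real.pi⁻¹ • translateIntegral volume g Complex.ofReal K :=
    eventually_of_mem ((isOpen_lt_im 0).mem_nhds hz) fun w hw =>
      dampedExtension_eq_translateIntegral _ g hw
  rw [(laplacian_congr_nhds eventually_eq).eq_of_nhds, eventually_eq.eq_of_nhds,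
    laplacian_smul _ (contDiffAt_infty.1 smooth 2), Pi.smul_apply, smul_eq_mul, smul_eq_mul,
    mul_left_comm]
  gcongr
  exact laplacian_translateIntegral_le hg hg0 Complex.continuous_ofReal (isOpen_lt_im _)
    sub_ofReal_mem_lt_im hK (fun w hw => laplacian_dampedKernel_dampedProfile_le hm
      ((half_pos hz).trans hw)) hmem

theorem dampedExtension_le_exp_div_sqrt (hm : 0 ≤ m) (hg : Integrable g) (hg0 : ∀ x, 0 ≤ g x)
    (hz : 1 ≤ z.im) :
    dampedExtension (dampedProfile m) g z ≤
      Real.pi⁻¹ * ((∫ t, g t) * (√(1 + 2 * m) * (Real.exp (-m * z.im) / √z.im))) := by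
  have hz0 : 0 < z.im := by linarith
  have hmem : z ∈ {w : ℂ | z.im / 2 < w.im} := half_lt_self (a := z.im) hz0
  rw [dampedExtension_eq_translateIntegral _ g hz0, ← integral_mul_const]
  refine mul_le_mul_of_nonneg_left ?_ (by positivity)
  refine integral_mono (integrable_smul_translate hg Complex.continuous_ofReal
    sub_ofReal_mem_lt_im (hasBoundedDerivsOn_dampedKernel hm (half_pos hz0)) hmem)
    (hg.mul_const _) fun t => mul_le_mul_of_nonneg_left ?_ (hg0 t)
  simpa using dampedKernel_dampedProfile_le (z := z - t) hm (by simpa using hz)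

theorem exists_linear_barrier (hm : 0 ≤ m) (hgc : Continuous g) (hg : Integrable g)
    (hg0 : ∀ x, 0 ≤ g x) (hgM : ∀ x, g x ≤ M) :
    ∃ u : ℂ → ℝ, ContDiffOn ℝ ∞ u {z : ℂ | 0 < z.im} ∧ Continuous u ∧ (∀ z, 0 ≤ u z) ∧
      (∀ z, u z ≤ M) ∧ (∀ x : ℝ, u x = g x) ∧ (∀ z : ℂ, 0 < z.im → Δ u z ≤ m ^ 2 * u z) ∧
      ∀ z : ℂ, 1 ≤ z.im →
        u z ≤ Real.pi⁻¹ * ((∫ t, g t) * (√(1 + 2 * m) * (Real.exp (-m * z.im) / √z.im))) := by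
  have abs_profile_le (r : ℝ) : |dampedProfile m r| ≤ 1 :=
    (abs_of_nonneg (dampedProfile_nonneg m r)).trans_le (dampedProfile_le_one m r)
  have abs_g_le (x : ℝ) : |g x| ≤ M := (abs_of_nonneg (hg0 x)).trans_le (hgM x)
  exact ⟨dampedExtension (dampedProfile m) g, contDiffOn_dampedExtension hm hg,
    continuous_dampedExtension (continuous_dampedProfile m) abs_profile_le hgc abs_g_le,
    dampedExtension_nonneg (dampedProfile_nonneg m) hg0,
    fun z => (le_abs_self _).trans (abs_dampedExtension_le abs_profile_le abs_g_le z),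
    dampedExtension_ofReal (dampedProfile_zero m) g,
    fun _ => laplacian_dampedExtension_le hm hg hg0,
    fun _ => dampedExtension_le_exp_div_sqrt hm hg hg0⟩

end DampedExtension

section Saturate

variable {k k' s : ℝ} {u : ℂ → ℝ} {z : ℂ}

/-- The concave quadratic `v` of `u` with `lap v ≤ k v - k k' v²` and `u ≤ v` whenever
`lap u ≤ k u`, `0 ≤ u` and `4 k' u ≤ 1`. -/
noncomputable def saturate (k' s : ℝ) : ℝ :=
  2 * s - 4 * k' * s ^ 2

theorem le_saturate (hs : 0 ≤ s) (hs' : 4 * k' * s ≤ 1) : s ≤ saturate k' s := by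
  unfold saturate
  nlinarith

theorem saturate_le (hk' : 0 ≤ k') (s : ℝ) : saturate k' s ≤ 2 * s :=
  sub_le_self _ (by positivity)

theorem contDiff_saturate (n : WithTop ℕ∞) (k' : ℝ) : ContDiff ℝ n (saturate k') := by
  unfold saturate
  fun_prop

theorem deriv_saturate (k' : ℝ) : deriv (saturate k') = fun s => 2 - 8 * k' * s := by
  ext s
  have h : HasDerivAt (saturate k') (2 * 1 - 4 * k' * (2 * s ^ 1 * 1)) s :=
    ((hasDerivAt_id s).const_mul 2).sub (((hasDerivAt_id s).pow 2).const_mul (4 * k'))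
  rw [h.deriv]
  ring

theorem lap_eq_laplacian (u : ℂ → ℝ) (z : ℂ) : lap u z = 1 / 4 * Δ u z := by
  rw [lap, laplacian_eq_iteratedFDeriv_complexPlane]

theorem lap_saturate_comp (hu : ContDiffAt ℝ 2 u z) :
    lap (saturate k' ∘ u) z = (1 / 2 - 2 * k' * u z) * Δ u z - 2 * k' * ‖∇ u z‖ ^ 2 := by
  have second : deriv (fun s => 2 - 8 * k' * s) (u z) = -(8 * k') := by
    simp [deriv_const_sub]
  rw [lap_eq_laplacian, laplacian_comp (contDiff_saturate 2 k').contDiffAt hu, deriv_saturate,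
    second]
  ring

theorem lap_saturate_comp_le (hk : 0 ≤ k) (hk' : 0 ≤ k') (hu : ContDiffAt ℝ 2 u z)
    (hu0 : 0 ≤ u z) (hu1 : 4 * k' * u z ≤ 1) (hΔ : Δ u z ≤ 4 * k * u z) :
    lap (saturate k' ∘ u) z ≤ k * saturate k' (u z) - k * k' * saturate k' (u z) ^ 2 := by
  have quartic_nonneg : 0 ≤ 16 * k * k' ^ 2 * u z ^ 3 * (1 - k' * u z) :=
    mul_nonneg (by positivity) (by linarith [mul_nonneg hk' hu0])
  calc lap (saturate k' ∘ u) z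
      = (1 / 2 - 2 * k' * u z) * Δ u z - 2 * k' * ‖∇ u z‖ ^ 2 := lap_saturate_comp hu
    _ ≤ (1 / 2 - 2 * k' * u z) * Δ u z := sub_le_self _ (by positivity)
    _ ≤ (1 / 2 - 2 * k' * u z) * (4 * k * u z) :=
        mul_le_mul_of_nonneg_left hΔ (by linarith)
    _ ≤ (1 / 2 - 2 * k' * u z) * (4 * k * u z) + 16 * k * k' ^ 2 * u z ^ 3 * (1 - k' * u z) :=
        le_add_of_nonneg_right quartic_nonneg
    _ = k * saturate k' (u z) - k * k' * saturate k' (u z) ^ 2 := by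
        unfold saturate
        ring

end Saturate

/-- **Half-plane nonlinear supersolution barrier.** Given `k, k' > 0` and a continuous,
nonnegative, integrable `g : ℝ → ℝ` with `g ≤ 1/(4k')`, there is `v`, smooth on the open
upper half-plane and continuous on its closure, with `v ≥ 0`, `v ≥ g` on `ℝ`,
`Δv ≤ k v − k k' v²` on the half-plane, and `v(x+iy) ≤ C ‖g‖₁ e^{−2√k y}/√y` for
`y ≥ 1` and some `C > 0`. -/
theorem stmt_7 (k k' : ℝ) (hk : 0 < k) (hk' : 0 < k')
    (g : ℝ → ℝ) (hgc : Continuous g) (hg0 : ∀ x : ℝ, 0 ≤ g x)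
    (hgi : MeasureTheory.Integrable g) (hgb : ∀ x : ℝ, g x ≤ 1 / (4 * k')) :
    ∃ v : ℂ → ℝ,
      ContDiffOn ℝ (⊤ : ℕ∞) v {z : ℂ | 0 < z.im} ∧
      ContinuousOn v {z : ℂ | 0 ≤ z.im} ∧
      (∀ z : ℂ, 0 ≤ z.im → 0 ≤ v z) ∧
      (∀ x : ℝ, g x ≤ v (x : ℂ)) ∧
      (∀ z : ℂ, 0 < z.im → lap v z ≤ k * v z - k * k' * v z ^ 2) ∧
      ∃ C : ℝ, 0 < C ∧
        ∀ x y : ℝ, 1 ≤ y →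
          v ((x : ℂ) + (y : ℂ) * Complex.I) ≤
            C * (∫ t : ℝ, |g t|) * Real.exp (-2 * Real.sqrt k * y) / Real.sqrt y := by
  obtain ⟨u, hu_smooth, hu_cont, hu0, hu_le, hu_real, hu_lap, hu_decay⟩ :=
    exists_linear_barrier (m := 2 * √k) (by positivity) hgc hgi hg0 hgb
  have hu1 (z : ℂ) : 4 * k' * u z ≤ 1 := (le_div_iff₀' (by positivity)).1 (hu_le z)
  have hmk : (2 * √k) ^ 2 = 4 * k := by
    rw [mul_pow, Real.sq_sqrt hk.le]
    norm_num
  refine ⟨saturate k' ∘ u, (contDiff_saturate _ k').comp_contDiffOn hu_smooth,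
    ((contDiff_saturate 0 k').continuous.comp hu_cont).continuousOn,
    fun z _ => (hu0 z).trans (le_saturate (hu0 z) (hu1 z)),
    fun x => (hu_real x).ge.trans (le_saturate (hu0 x) (hu1 x)), fun z hz => ?_,
    2 * Real.pi⁻¹ * √(1 + 2 * (2 * √k)), by positivity, fun x y hy => ?_⟩
  · exact lap_saturate_comp_le hk.le hk'.le
      (contDiffAt_infty.1 (hu_smooth.contDiffAt ((isOpen_lt_im 0).mem_nhds hz)) 2) (hu0 z) (hu1 z)
      (hmk ▸ hu_lap z hz)
  · have decay := hu_decay (x + y * Complex.I) (by simpa using hy)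
    rw [show (x + y * Complex.I : ℂ).im = y by simp] at decay
    simp only [abs_of_nonneg (hg0 _)]
    exact (saturate_le hk'.le _).trans
      ((mul_le_mul_of_nonneg_left decay zero_le_two).trans_eq (by ring_nf))
end

section
/- Let B be the symmetric bilinear form on ℝ⁵ given by B(x,y) = x₁y₃ + x₂y₄ + x₃y₁ + x₄y₂ − x₅y₅. Let v₁, v₂, v₃, v₄ ∈ ℝ⁵ be a future-directed negative light-like configuration with 4 vectors, i.e.: B(v_i, v_i) = 0 for all i; B(v_i, v_{i+1}) = 0 for all i (indices mod 4); B(v₁, v₃) < 0 and B(v₂, v₄) < 0; and det(v_i, v_{i+1}, e₁ − e₃, e₂ − e₄, e₅) > 0 for all i (indices mod 4). Then there exist g ∈ SO₀(B) (the identity component of the group of linear automorphisms of ℝ⁵ preserving B) and positive reals μ₁, μ₂, μ₃, μ₄ such that g v₁ = μ₁ e₁, g v₂ = μ₂ e₂, g v₃ = −μ₃ e₃ and g v₄ = −μ₄ e₄. -/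
/-- The symmetric bilinear form `B(x,y) = x₁y₃ + x₂y₄ + x₃y₁ + x₄y₂ − x₅y₅` of
signature `(2,3)` on `ℝ⁵`. -/
def B5 (x y : Fin 5 → ℝ) : ℝ :=
  x 0 * y 2 + x 1 * y 3 + x 2 * y 0 + x 3 * y 1 - x 4 * y 4

/-- The standard basis vectors of `ℝ⁵`. -/
noncomputable def e5 (i : Fin 5) : Fin 5 → ℝ := Pi.single i 1

/-- The group `O(B)` of linear automorphisms of `ℝ⁵` preserving `B`, realized as the
set of matrices `A` with `B(Ax, Ay) = B(x,y)` for all `x, y`. -/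
def OB : Set (Matrix (Fin 5) (Fin 5) ℝ) :=
  {A | ∀ x y : Fin 5 → ℝ, B5 (A.mulVec x) (A.mulVec y) = B5 x y}

/-- The determinant of the `5×5` matrix with the given columns. -/
noncomputable def detCols (w : Fin 5 → Fin 5 → ℝ) : ℝ :=
  Matrix.det (Matrix.of fun i j => w j i)

/-!
The Eichler transformation `E(u, w)` of an isotropic vector `u` and a vector `w ⊥ u` is an isometry,
joined to the identity by `t ↦ E(u, t w)`. Such a map carries a vector `x` to any vector `y` of the
same norm with `B(u, x) = B(u, y) ≠ 0`, and it fixes `u` and whatever is orthogonal to `u`, `x` and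
`y`. So a few such moves, each fixing the vertices already placed, carry one quadrilateral to
another. Only the first two vertices need care: they span an isotropic plane, which projects
isomorphically to a positive definite plane. Hence the sign of its orientation is constant along
paths in `O(B)`, and it decides on which half of the light cone of `e₁^⊥ / e₁` the second vertex
lies.
-/

open Matrix

section Eichler

variable {K M : Type*} [Field K] [AddCommGroup M] [Module K M] (B : LinearMap.BilinForm K M)

/-- The Eichler transformation (Siegel transvection) attached to an isotropic vector `u` and a
vector `w` orthogonal to `u`, for a symmetric form `B`. -/
def eichler (u w : M) : M →ₗ[K] M :=
  LinearMap.id + (B u).smulRight w - (B w + (B w w / 2) • B u).smulRight u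

theorem eichler_apply (u w x : M) :
    eichler B u w x = x + B u x • w - (B w x + B w w / 2 * B u x) • u := by
  simp [eichler]

@[simp]
theorem eichler_zero (u : M) : eichler B u 0 = LinearMap.id := by
  ext x
  simp [eichler_apply]

theorem eichler_apply_of_ortho {u w x : M} (hux : B u x = 0) (hwx : B w x = 0) :
    eichler B u w x = x := by
  simp [eichler_apply, hux, hwx]

variable {B} [NeZero (2 : K)]

theorem eichler_isometry (hB : B.IsSymm) {u w : M} (hu : B u u = 0) (huw : B u w = 0) (x y : M) :
    B (eichler B u w x) (eichler B u w y) = B x y := by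
  have hwu : B w u = 0 := by rw [hB.eq, huw]
  simp only [eichler_apply, map_add, map_sub, map_smul, LinearMap.add_apply, LinearMap.sub_apply,
    LinearMap.smul_apply, smul_eq_mul, hu, huw, hwu, hB.eq x u, hB.eq x w]
  field_simp [two_ne_zero (α := K)]
  ring

theorem eichler_apply_eq (hB : B.IsSymm) {u x y : M} (hxy : B x x = B y y)
    (hux : B u x ≠ 0) : eichler B u ((B u x)⁻¹ • (y - x)) x = y := by
  have hcoeff : B ((B u x)⁻¹ • (y - x)) x +
      B ((B u x)⁻¹ • (y - x)) ((B u x)⁻¹ • (y - x)) / 2 * B u x = 0 := by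
    simp only [map_sub, map_smul, LinearMap.sub_apply, LinearMap.smul_apply, smul_eq_mul, ← hxy,
      hB.eq x y]
    field_simp [two_ne_zero (α := K)]
    ring
  rw [eichler_apply, hcoeff, smul_inv_smul₀ hux]
  simp

end Eichler

section Isometry

variable {R ι : Type*} [CommRing R] [Fintype ι] [DecidableEq ι]

/-- The matrices preserving a bilinear form `B` on `ι → R`. If `B` is nondegenerate this is its
orthogonal group. -/
def isometrySubmonoid (B : LinearMap.BilinForm R (ι → R)) : Submonoid (Matrix ι ι R) where
  carrier := {A | ∀ x y, B (A *ᵥ x) (A *ᵥ y) = B x y}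
  one_mem' x y := by simp only [one_mulVec]
  mul_mem' hA hC x y := by rw [← mulVec_mulVec, ← mulVec_mulVec, hA, hC]

theorem mulVecLin_injective_of_mem_isometrySubmonoid {B : LinearMap.BilinForm R (ι → R)}
    (hB : B.SeparatingLeft) {A : Matrix ι ι R} (hA : A ∈ isometrySubmonoid B) :
    Function.Injective A.mulVecLin := by
  refine (injective_iff_map_eq_zero _).2 fun x hx => hB x fun y => ?_
  rw [← hA x y, ← mulVecLin_apply, hx, map_zero, LinearMap.zero_apply]

end Isometry

section JoinedIn

theorem joinedIn_submonoid_mul {M : Type*} [Monoid M] [TopologicalSpace M] [ContinuousMul M]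
    {S : Submonoid M} {a b : M} (ha : JoinedIn (S : Set M) 1 a) (hb : JoinedIn (S : Set M) 1 b) :
    JoinedIn (S : Set M) 1 (a * b) := by
  simpa only [one_mul, Submonoid.coe_mul_self_eq] using ha.mul hb

theorem lt_of_joinedIn_of_forall_ne {X α : Type*} [TopologicalSpace X] [LinearOrder α]
    [TopologicalSpace α] [OrderClosedTopology α] {F : Set X} {a b : X} {f : X → α} {c : α}
    (hab : JoinedIn F a b) (hf : ContinuousOn f F) (hne : ∀ x ∈ F, f x ≠ c) (ha : c < f a) :
    c < f b := by
  obtain ⟨γ, hγ⟩ := hab.map_continuousOn hf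
  by_contra! hb
  obtain ⟨t, ht⟩ := mem_range_of_exists_le_of_exists_ge γ.continuous
    ⟨1, γ.target.trans_le hb⟩ ⟨0, ha.le.trans_eq γ.source.symm⟩
  obtain ⟨x, hx, hxt⟩ := hγ t
  exact hne x hx (hxt.trans ht)

end JoinedIn

section RayCongruent

variable {ι κ : Type*} [Fintype ι] [DecidableEq ι] {B : LinearMap.BilinForm ℝ (ι → ℝ)}
  {v w z : κ → ι → ℝ}

theorem joinedIn_toMatrix'_eichler (hB : B.IsSymm) {u w : ι → ℝ} (hu : B u u = 0)
    (huw : B u w = 0) :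
    JoinedIn (isometrySubmonoid B : Set (Matrix ι ι ℝ)) 1 (eichler B u w).toMatrix' := by
  refine JoinedIn.ofLine (f := fun t : ℝ => (eichler B u (t • w)).toMatrix') ?_ (by simp) (by simp)
    ?_
  · refine (continuous_matrix fun i j => ?_).continuousOn
    simp only [LinearMap.toMatrix'_apply, eichler_apply, map_smul, LinearMap.smul_apply,
      Pi.add_apply, Pi.sub_apply, Pi.smul_apply, smul_eq_mul]
    fun_prop
  · rintro _ ⟨t, -, rfl⟩ x y
    simp only [LinearMap.toMatrix'_mulVec]
    exact eichler_isometry hB hu (by simp [huw]) x y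

theorem exists_joinedIn_mulVec_eq_pos_smul (hB : B.IsSymm) {u x y : ι → ℝ} (hu : B u u = 0)
    (hx : B x x = 0) (hy : B y y = 0) (hpos : 0 < B u x * B u y) :
    ∃ A, JoinedIn (isometrySubmonoid B : Set (Matrix ι ι ℝ)) 1 A ∧
      (∃ μ : ℝ, 0 < μ ∧ A *ᵥ x = μ • y) ∧
      ∀ z, z = u ∨ (B u z = 0 ∧ B x z = 0 ∧ B y z = 0) → A *ᵥ z = z := by
  obtain ⟨hux, huy⟩ := mul_ne_zero_iff.1 hpos.ne'
  set μ := B u x / B u y with hμ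
  have hμpos : 0 < μ := by
    rw [hμ, ← mul_div_mul_right _ _ huy]
    exact div_pos hpos (mul_self_pos.2 huy)
  set w := (B u x)⁻¹ • (μ • y - x) with hw
  have huw : B u w = 0 := by simp [hw, hμ, huy]
  refine ⟨_, joinedIn_toMatrix'_eichler hB hu huw, ⟨μ, hμpos, ?_⟩, fun z hz => ?_⟩
  · rw [LinearMap.toMatrix'_mulVec]
    exact eichler_apply_eq hB (by simp [hx, hy]) hux
  · rw [LinearMap.toMatrix'_mulVec]
    rcases hz with rfl | ⟨huz, hxz, hyz⟩
    · exact eichler_apply_of_ortho B hu (by rw [hB.eq, huw])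
    · exact eichler_apply_of_ortho B huz (by simp [hw, hxz, hyz])

variable (B v w) in
/-- The families of rays `ℝ₊ vᵢ` and `ℝ₊ wᵢ` are related by an element of the identity component of
the orthogonal group of `B`. -/
def RayCongruent : Prop :=
  ∃ A, JoinedIn (isometrySubmonoid B : Set (Matrix ι ι ℝ)) 1 A ∧
    ∃ μ : κ → ℝ, (∀ i, 0 < μ i) ∧ ∀ i, A *ᵥ v i = μ i • w i

theorem RayCongruent.trans (hvw : RayCongruent B v w) (hwz : RayCongruent B w z) :
    RayCongruent B v z := by
  obtain ⟨A, hA, μ, hμ, hAv⟩ := hvw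
  obtain ⟨C, hC, ν, hν, hCw⟩ := hwz
  refine ⟨C * A, joinedIn_submonoid_mul hC hA, μ * ν, fun i => mul_pos (hμ i) (hν i), fun i => ?_⟩
  rw [← mulVec_mulVec, hAv, mulVec_smul, hCw, smul_smul, Pi.mul_apply]

theorem RayCongruent.exists_pos_mul_eq (h : RayCongruent B v w) (i j : κ) :
    ∃ c > 0, B (v i) (v j) = c * B (w i) (w j) := by
  obtain ⟨A, hA, μ, hμ, hAv⟩ := h
  refine ⟨μ i * μ j, mul_pos (hμ i) (hμ j), ?_⟩
  rw [← hA.target_mem (v i) (v j), hAv, hAv]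
  simp only [map_smul, LinearMap.smul_apply, smul_eq_mul]
  ring

theorem exists_rayCongruent_apply_eq (hB : B.IsSymm) {i : κ} {u y : ι → ℝ} (hu : B u u = 0)
    (hi : B (v i) (v i) = 0) (hy : B y y = 0) (hpos : 0 < B u (v i) * B u y) :
    ∃ w, RayCongruent B v w ∧ w i = y ∧ ∀ j ≠ i,
      v j = u ∨ (B u (v j) = 0 ∧ B (v i) (v j) = 0 ∧ B y (v j) = 0) → w j = v j := by
  classical
  obtain ⟨A, hA, ⟨μ, hμ, hAi⟩, hfix⟩ := exists_joinedIn_mulVec_eq_pos_smul hB hu hi hy hpos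
  refine ⟨Function.update (fun j => A *ᵥ v j) i y, ⟨A, hA, Function.update 1 i μ, ?_, ?_⟩, ?_, ?_⟩
  · intro j
    rcases eq_or_ne j i with rfl | hj
    · simpa using hμ
    · simp [hj]
  · intro j
    rcases eq_or_ne j i with rfl | hj
    · simpa using hAi
    · simp [hj]
  · simp
  · intro j hj hvj
    rw [Function.update_of_ne hj, hfix _ hvj]

end RayCongruent

section Quadrilateral

/-- A negative light-like quadrilateral for the form `B`, given by vectors spanning its vertices in
cyclic order. -/
structure IsNegativeQuadrilateral {R M : Type*} [CommSemiring R] [Preorder R] [AddCommMonoid M]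
    [Module R M] (B : LinearMap.BilinForm R M) (v : Fin 4 → M) : Prop where
  isotropic : ∀ i, B (v i) (v i) = 0
  ortho : ∀ i, B (v i) (v (i + 1)) = 0
  neg : ∀ i, B (v i) (v (i + 2)) < 0

namespace IsNegativeQuadrilateral

theorem ortho_of_ne_opposite {R M : Type*} [CommSemiring R] [Preorder R] [AddCommMonoid M]
    [Module R M] {B : LinearMap.BilinForm R M} (hB : B.IsSymm) {v : Fin 4 → M}
    (hv : IsNegativeQuadrilateral B v) {i j : Fin 4} (hij : j ≠ i + 2) : B (v i) (v j) = 0 := by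
  obtain rfl | rfl | rfl : j = i ∨ j = i + 1 ∨ i = j + 1 := by
    revert i j
    decide
  · exact hv.isotropic j
  · exact hv.ortho i
  · rw [hB.eq, hv.ortho]

variable {ι : Type*} [Fintype ι] [DecidableEq ι] {B : LinearMap.BilinForm ℝ (ι → ℝ)}
  {v w : Fin 4 → ι → ℝ}

theorem congr (hv : IsNegativeQuadrilateral B v) (h : RayCongruent B v w) :
    IsNegativeQuadrilateral B w where
  isotropic i := by
    obtain ⟨c, hc, hcw⟩ := h.exists_pos_mul_eq i i
    simpa [hv.isotropic, hc.ne'] using hcw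
  ortho i := by
    obtain ⟨c, hc, hcw⟩ := h.exists_pos_mul_eq i (i + 1)
    simpa [hv.ortho, hc.ne'] using hcw
  neg i := by
    obtain ⟨c, hc, hcw⟩ := h.exists_pos_mul_eq i (i + 2)
    exact neg_of_mul_neg_right (hcw ▸ hv.neg i) hc.le

theorem exists_rayCongruent_opposite_eq (hB : B.IsSymm) (hv : IsNegativeQuadrilateral B v)
    (hw : IsNegativeQuadrilateral B w) {i : Fin 4} (hi : v i = w i) :
    ∃ v', RayCongruent B v v' ∧ v' (i + 2) = w (i + 2) ∧ ∀ j ≠ i + 2, v j = w j → v' j = w j := by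
  obtain ⟨v', hvv', h2, hfix⟩ := exists_rayCongruent_apply_eq hB (hv.isotropic i)
    (hv.isotropic (i + 2)) (hw.isotropic (i + 2))
    (mul_pos_of_neg_of_neg (hv.neg i) (hi ▸ hw.neg i))
  refine ⟨v', hvv', h2, fun j hj hjw => (hfix j hj ?_).trans hjw⟩
  rcases eq_or_ne j i with rfl | hji
  · exact .inl rfl
  · have hj' : j ≠ i + 2 + 2 := by rwa [add_assoc, show (2 + 2 : Fin 4) = 0 from rfl, add_zero]
    exact .inr ⟨hv.ortho_of_ne_opposite hB hj, hv.ortho_of_ne_opposite hB hj',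
      hjw ▸ hw.ortho_of_ne_opposite hB hj'⟩

theorem rayCongruent_of_eq (hB : B.IsSymm) (hv : IsNegativeQuadrilateral B v)
    (hw : IsNegativeQuadrilateral B w) (h0 : v 0 = w 0) (h1 : v 1 = w 1) : RayCongruent B v w := by
  obtain ⟨v', hvv', h2', hfix⟩ := hv.exists_rayCongruent_opposite_eq hB hw h0
  have h0' : v' 0 = w 0 := hfix 0 (by decide) h0
  have h1' : v' 1 = w 1 := hfix 1 (by decide) h1
  obtain ⟨v'', hvv'', h3'', hfix'⟩ :=
    (hv.congr hvv').exists_rayCongruent_opposite_eq hB hw h1'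
  obtain rfl : v'' = w := by
    ext1 i
    fin_cases i
    exacts [hfix' 0 (by decide) h0', hfix' 1 (by decide) h1', hfix' 2 (by decide) h2', h3'']
  exact hvv'.trans hvv''

end IsNegativeQuadrilateral

end Quadrilateral

/-- `B5` as a bilinear form. -/
def bilinB5 : LinearMap.BilinForm ℝ (Fin 5 → ℝ) :=
  LinearMap.mk₂ ℝ B5
    (fun _ _ _ => by simp only [B5, Pi.add_apply]; ring)
    (fun _ _ _ => by simp only [B5, Pi.smul_apply, smul_eq_mul]; ring)
    (fun _ _ _ => by simp only [B5, Pi.add_apply]; ring)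
    (fun _ _ _ => by simp only [B5, Pi.smul_apply, smul_eq_mul]; ring)

theorem bilinB5_apply (x y : Fin 5 → ℝ) : bilinB5 x y = B5 x y := rfl

theorem coe_isometrySubmonoid_bilinB5 :
    (isometrySubmonoid bilinB5 : Set (Matrix (Fin 5) (Fin 5) ℝ)) = OB := rfl

theorem bilinB5_isSymm : bilinB5.IsSymm :=
  ⟨fun x y => by simp only [bilinB5_apply, B5]; ring⟩

theorem bilinB5_e5 (x : Fin 5 → ℝ) (i : Fin 5) :
    bilinB5 x (e5 i) = ![x 2, x 3, x 0, x 1, -x 4] i := by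
  fin_cases i <;> simp [bilinB5_apply, B5, e5]

theorem bilinB5_separatingLeft : bilinB5.SeparatingLeft := by
  intro x hx
  have hcoord (i : Fin 5) : ![x 2, x 3, x 0, x 1, -x 4] i = 0 := (bilinB5_e5 x i).symm.trans (hx _)
  ext i
  fin_cases i
  exacts [hcoord 2, hcoord 3, hcoord 0, hcoord 1, neg_eq_zero.1 (hcoord 4)]

/-- Up to a positive factor, the oriented area of the orthogonal projection of `(x, y)` to the
positive definite plane spanned by `e₁ + e₃` and `e₂ + e₄`. It is positive on consecutive vertices
of a future-directed polygon. -/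
def timelikeArea (x y : Fin 5 → ℝ) : ℝ :=
  (x 0 + x 2) * (y 1 + y 3) - (x 1 + x 3) * (y 0 + y 2)

theorem detCols_eq_timelikeArea (x y : Fin 5 → ℝ) :
    detCols ![x, y, e5 0 - e5 2, e5 1 - e5 3, e5 4] = timelikeArea x y := by
  simp [timelikeArea, detCols, e5, det_succ_row_zero, Fin.sum_univ_succ, Fin.succAbove,
    Pi.single_apply]
  ring

theorem eq_zero_of_isotropic_of_proj_eq_zero {x : Fin 5 → ℝ} (hx : bilinB5 x x = 0)
    (h02 : x 0 + x 2 = 0) (h13 : x 1 + x 3 = 0) : x = 0 := by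
  have h2 : x 2 = -x 0 := by linarith
  have h3 : x 3 = -x 1 := by linarith
  simp only [bilinB5_apply, B5, h2, h3] at hx
  have h0 : x 0 = 0 := by nlinarith [sq_nonneg (x 0), sq_nonneg (x 1), sq_nonneg (x 4)]
  have h1 : x 1 = 0 := by nlinarith [sq_nonneg (x 1), sq_nonneg (x 4)]
  have h4 : x 4 = 0 := by nlinarith [sq_nonneg (x 4)]
  ext i
  fin_cases i <;> simp [*]

theorem timelikeArea_ne_zero {x y : Fin 5 → ℝ} (hx : bilinB5 x x = 0) (hy : bilinB5 y y = 0)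
    (hxy : bilinB5 x y = 0) (hli : LinearIndependent ℝ ![x, y]) : timelikeArea x y ≠ 0 := by
  have comb_isotropic (a b : ℝ) : bilinB5 (a • x + b • y) (a • x + b • y) = 0 := by
    simp only [bilinB5_apply, B5, Pi.add_apply, Pi.smul_apply, smul_eq_mul] at *
    linear_combination a ^ 2 * hx + b ^ 2 * hy + 2 * a * b * hxy
  rw [LinearIndependent.pair_iff] at hli
  intro harea
  rw [timelikeArea] at harea
  obtain ⟨-, hx13⟩ := hli (y 1 + y 3) (-(x 1 + x 3)) <|
    eq_zero_of_isotropic_of_proj_eq_zero (comb_isotropic _ _)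
      (by simp only [Pi.add_apply, Pi.smul_apply, smul_eq_mul]; linear_combination harea)
      (by simp only [Pi.add_apply, Pi.smul_apply, smul_eq_mul]; ring)
  obtain ⟨-, hx02⟩ := hli (y 0 + y 2) (-(x 0 + x 2)) <|
    eq_zero_of_isotropic_of_proj_eq_zero (comb_isotropic _ _)
      (by simp only [Pi.add_apply, Pi.smul_apply, smul_eq_mul]; ring)
      (by simp only [Pi.add_apply, Pi.smul_apply, smul_eq_mul]; linear_combination -harea)
  have hx0 : x = 0 := eq_zero_of_isotropic_of_proj_eq_zero hx (by linarith) (by linarith)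
  simpa using hli 1 0 (by simp [hx0])

theorem linearIndependent_of_timelikeArea_ne_zero {x y : Fin 5 → ℝ} (h : timelikeArea x y ≠ 0) :
    LinearIndependent ℝ ![x, y] := by
  rw [LinearIndependent.pair_iff]
  intro a b hab
  have hab' (i : Fin 5) : a * x i + b * y i = 0 := congrFun hab i
  constructor <;> refine (mul_eq_zero.1 ?_).resolve_right h <;> rw [timelikeArea]
  · linear_combination (y 1 + y 3) * (hab' 0 + hab' 2) - (y 0 + y 2) * (hab' 1 + hab' 3)
  · linear_combination (x 0 + x 2) * (hab' 1 + hab' 3) - (x 1 + x 3) * (hab' 0 + hab' 2)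

theorem timelikeArea_mulVec_pos {A : Matrix (Fin 5) (Fin 5) ℝ}
    (hA : JoinedIn (isometrySubmonoid bilinB5 : Set _) 1 A) {x y : Fin 5 → ℝ}
    (hx : bilinB5 x x = 0) (hy : bilinB5 y y = 0) (hxy : bilinB5 x y = 0)
    (h : 0 < timelikeArea x y) : 0 < timelikeArea (A *ᵥ x) (A *ᵥ y) := by
  refine lt_of_joinedIn_of_forall_ne (f := fun C => timelikeArea (C *ᵥ x) (C *ᵥ y)) hA ?_
    (fun C hC => ?_) (by simpa only [one_mulVec] using h)
  · unfold timelikeArea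
    fun_prop
  · refine timelikeArea_ne_zero (by rw [hC, hx]) (by rw [hC, hy]) (by rw [hC, hxy]) ?_
    have hli := (linearIndependent_of_timelikeArea_ne_zero h.ne').map' _ <|
      LinearMap.ker_eq_bot.2 <|
        mulVecLin_injective_of_mem_isometrySubmonoid bilinB5_separatingLeft hC
    have himage : C.mulVecLin ∘ ![x, y] = ![C *ᵥ x, C *ᵥ y] := by
      ext1 i
      fin_cases i <;> rfl
    exact himage ▸ hli

theorem eq_zero_of_forall_add_mul_le {K : Type*} [Field K] [LinearOrder K] [IsStrictOrderedRing K]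
    {a b c : K} (h : ∀ t, a + t * b ≤ c) : b = 0 := by
  by_contra hb
  have hle := h ((c + 1 - a) / b)
  rw [div_mul_cancel₀ _ hb] at hle
  linarith

-- The expression is `B(u, x)` for the isotropic vector `u = (-bc, b, 1, c, 0)`, for which
-- `B(u, e₁) = 1`. It is negative for all `b, c` exactly on the ray of `-e₁`.
theorem exists_pos_or_neg_axis {x : Fin 5 → ℝ} (hx : bilinB5 x x = 0) (hx0 : x ≠ 0) :
    (∃ b c : ℝ, 0 < x 0 + c * x 1 - b * c * x 2 + b * x 3) ∨ (x 0 < 0 ∧ x 1 = 0) := by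
  by_contra! hcon
  obtain ⟨hle, hneg⟩ := hcon
  have h1 : x 1 = 0 := eq_zero_of_forall_add_mul_le fun t => by simpa using hle 0 t
  have h3 : x 3 = 0 := eq_zero_of_forall_add_mul_le fun t => by simpa using hle t 0
  have h2 : x 2 = 0 := eq_zero_of_forall_add_mul_le (a := x 0) fun t => by
    simpa [h1, h3] using hle (-1) t
  have h0 : x 0 = 0 := by
    refine le_antisymm (by simpa using hle 0 0) (not_lt.1 fun h => hneg h h1)
  refine hx0 (eq_zero_of_isotropic_of_proj_eq_zero hx ?_ ?_) <;> simp [*]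

section Normalization

variable {κ : Type*} {v w : κ → Fin 5 → ℝ} {i j : κ}

theorem RayCongruent.timelikeArea_pos (hvw : RayCongruent bilinB5 v w)
    (hi : bilinB5 (v i) (v i) = 0) (hj : bilinB5 (v j) (v j) = 0) (hij : bilinB5 (v i) (v j) = 0)
    (h : 0 < timelikeArea (v i) (v j)) : 0 < timelikeArea (w i) (w j) := by
  obtain ⟨A, hA, μ, hμ, hAv⟩ := hvw
  have hscaled := timelikeArea_mulVec_pos hA hi hj hij h
  have hsmul : timelikeArea (μ i • w i) (μ j • w j) = μ i * μ j * timelikeArea (w i) (w j) := by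
    simp only [timelikeArea, Pi.smul_apply, smul_eq_mul]
    ring
  rw [hAv, hAv, hsmul] at hscaled
  exact pos_of_mul_pos_right hscaled (mul_pos (hμ i) (hμ j)).le

theorem exists_rayCongruent_apply_eq_e5_zero (hi : bilinB5 (v i) (v i) = 0) (hne : v i ≠ 0) :
    ∃ w, RayCongruent bilinB5 v w ∧ w i = e5 0 := by
  have of_pos {v : κ → Fin 5 → ℝ} (hi : bilinB5 (v i) (v i) = 0) {b c : ℝ}
      (hpos : 0 < v i 0 + c * v i 1 - b * c * v i 2 + b * v i 3) :
      ∃ w, RayCongruent bilinB5 v w ∧ w i = e5 0 := by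
    obtain ⟨w, hvw, hw, -⟩ := exists_rayCongruent_apply_eq bilinB5_isSymm
      (u := ![-(b * c), b, 1, c, 0]) (y := e5 0)
      (by simp only [bilinB5_apply, B5, cons_val]; ring) hi (by simp [bilinB5_apply, B5, e5])
      (by rw [bilinB5_e5]; simp only [bilinB5_apply, B5, cons_val]; linarith)
    exact ⟨w, hvw, hw⟩
  obtain ⟨b, c, hpos⟩ | ⟨h0, h1⟩ := exists_pos_or_neg_axis hi hne
  · exact of_pos hi hpos
  · obtain ⟨w, hvw, hw, -⟩ := exists_rayCongruent_apply_eq bilinB5_isSymm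
      (u := e5 3 - e5 2) (y := e5 1) (by simp [bilinB5_apply, B5, e5]) hi
      (by simp [bilinB5_apply, B5, e5]) (by simp [bilinB5_apply, B5, e5, h0, h1])
    obtain ⟨z, hwz, hz⟩ := of_pos (v := w) (b := 0) (c := 1) (by simp [hw, bilinB5_apply, B5, e5])
      (by simp [hw, e5])
    exact ⟨z, hvw.trans hwz, hz⟩

theorem exists_rayCongruent_apply_eq_e5_one (hne : i ≠ j) (hi : v i = e5 0)
    (hj : bilinB5 (v j) (v j) = 0) (hij : bilinB5 (v i) (v j) = 0)
    (harea : 0 < timelikeArea (v i) (v j)) :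
    ∃ w, RayCongruent bilinB5 v w ∧ w i = e5 0 ∧ w j = e5 1 := by
  have h2 : v j 2 = 0 := by simpa [bilinB5_apply, B5, hi, e5] using hij
  have h13 : 0 < v j 1 + v j 3 := by simpa [timelikeArea, hi, e5] using harea
  obtain ⟨c, hc, hc4⟩ : ∃ c : ℝ, c * c = 2 ∧ c * v j 4 ≤ 0 := by
    rcases le_total 0 (v j 4) with h | h
    · exact ⟨-√2, by simp, by nlinarith [Real.sqrt_nonneg 2]⟩
    · exact ⟨√2, by simp, mul_nonpos_of_nonneg_of_nonpos (Real.sqrt_nonneg 2) h⟩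
  obtain ⟨w, hvw, hw, hfix⟩ := exists_rayCongruent_apply_eq bilinB5_isSymm (i := j)
    (u := ![0, 1, 0, 1, c]) (y := e5 1)
    (by simp only [bilinB5_apply, B5, cons_val]; linarith) hj (by simp [bilinB5_apply, B5, e5])
    (by rw [bilinB5_e5]; simp only [bilinB5_apply, B5, cons_val]; linarith)
  refine ⟨w, hvw, (hfix i hne (.inr ⟨?_, ?_, ?_⟩)).trans hi, hw⟩
  · simp [bilinB5_apply, B5, hi, e5]
  · simp [bilinB5_apply, B5, hi, e5, h2]
  · simp [bilinB5_apply, B5, hi, e5]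

end Normalization

theorem isNegativeQuadrilateral_standard :
    IsNegativeQuadrilateral bilinB5 ![e5 0, e5 1, -e5 2, -e5 3] where
  isotropic i := by fin_cases i <;> simp [bilinB5_apply, B5, e5]
  ortho i := by fin_cases i <;> simp [bilinB5_apply, B5, e5]
  neg i := by fin_cases i <;> simp [bilinB5_apply, B5, e5]

theorem IsNegativeQuadrilateral.rayCongruent_standard {v : Fin 4 → Fin 5 → ℝ}
    (hv : IsNegativeQuadrilateral bilinB5 v) (harea : 0 < timelikeArea (v 0) (v 1)) :
    RayCongruent bilinB5 v ![e5 0, e5 1, -e5 2, -e5 3] := by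
  have hv0 : v 0 ≠ 0 := fun h => by simp [timelikeArea, h] at harea
  obtain ⟨w, hvw, hw0⟩ := exists_rayCongruent_apply_eq_e5_zero (hv.isotropic 0) hv0
  have hw := hv.congr hvw
  have harea_w := hvw.timelikeArea_pos (hv.isotropic 0) (hv.isotropic 1) (hv.ortho 0) harea
  obtain ⟨z, hwz, hz0, hz1⟩ := exists_rayCongruent_apply_eq_e5_one zero_ne_one hw0
    (hw.isotropic 1) (hw.ortho 0) harea_w
  exact (hvw.trans hwz).trans <|
    (hw.congr hwz).rayCongruent_of_eq bilinB5_isSymm isNegativeQuadrilateral_standard hz0 hz1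

/-- **Uniqueness of the future-directed negative light-like quadrilateral.**
Any future-directed negative light-like configuration of 4 isotropic vectors can be
moved by an element of the identity component `SO₀(B)` to `(μ₁e₁, μ₂e₂, −μ₃e₃, −μ₄e₄)`
with `μᵢ > 0`. -/
theorem stmt_14 (v : Fin 4 → Fin 5 → ℝ)
    (hiso : ∀ i : Fin 4, B5 (v i) (v i) = 0)
    (hconsec : ∀ i : Fin 4, B5 (v i) (v (i + 1)) = 0)
    (hneg : B5 (v 0) (v 2) < 0 ∧ B5 (v 1) (v 3) < 0)
    (hfut : ∀ i : Fin 4,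
      0 < detCols ![v i, v (i + 1), e5 0 - e5 2, e5 1 - e5 3, e5 4]) :
    ∃ g : Matrix (Fin 5) (Fin 5) ℝ, JoinedIn OB 1 g ∧
      ∃ μ : Fin 4 → ℝ, (∀ i, 0 < μ i) ∧
        g.mulVec (v 0) = μ 0 • e5 0 ∧
        g.mulVec (v 1) = μ 1 • e5 1 ∧
        g.mulVec (v 2) = -(μ 2 • e5 2) ∧
        g.mulVec (v 3) = -(μ 3 • e5 3) := by
  have hv : IsNegativeQuadrilateral bilinB5 v := by
    refine ⟨hiso, hconsec, fun i => ?_⟩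
    fin_cases i
    exacts [hneg.1, hneg.2, (bilinB5_isSymm.eq _ _).trans_lt hneg.1,
      (bilinB5_isSymm.eq _ _).trans_lt hneg.2]
  have harea : 0 < timelikeArea (v 0) (v 1) := (hfut 0).trans_eq (detCols_eq_timelikeArea _ _)
  obtain ⟨g, hg, μ, hμ, hgv⟩ := hv.rayCongruent_standard harea
  exact ⟨g, coe_isometrySubmonoid_bilinB5 ▸ hg, μ, hμ, hgv 0, hgv 1,
    (hgv 2).trans (smul_neg _ _), (hgv 3).trans (smul_neg _ _)⟩
end
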